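/- arXiv:1205.3102 — 3 statements merged into one kernel-verified Lean document; each statement's English description precedes it below -/
import Mathlib

section
/- Let n ≥ 2d. Consider the cones Σ^S_{n,2d} ⊆ ℝ^{π(2d)} for n ≥ 2d. Then the set-theoretic limit of this sequence of cones exists and equals their intersection; that is, ⋃_{N≥2d} ⋂_{n≥N} Σ^S_{n,2d} = ⋂_{N≥2d} ⋃_{n≥N} Σ^S_{n,2d} = ⋂_{n≥2d} Σ^S_{n,2d}. -/
open MvPolynomial

/-- The i-th normalized power sum `p_i^{(n)} = (1/n)(x_1^i + ⋯ + x_n^i)`. -/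
noncomputable def psum (n i : ℕ) : MvPolynomial (Fin n) ℝ :=
  C ((n : ℝ)⁻¹) * ∑ j : Fin n, X j ^ i

/-- For a partition `λ` of `k`, `p_λ^{(n)} = p_{λ_1}^{(n)} ⋯ p_{λ_l}^{(n)}`. -/
noncomputable def pPart (n : ℕ) {k : ℕ} (lam : Nat.Partition k) : MvPolynomial (Fin n) ℝ :=
  (lam.parts.map (psum n)).prod

/-- The symmetric form `f^{(n)} = Σ_{λ ⊢ k} c_λ p_λ^{(n)}` determined by the
coefficient vector `c`. -/
noncomputable def symForm (n : ℕ) {k : ℕ} (c : Nat.Partition k → ℝ) : MvPolynomial (Fin n) ℝ :=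
  ∑ lam : Nat.Partition k, C (c lam) * pPart n lam

/-- `Σ^S_{n,2d}`: coefficient vectors whose associated symmetric form in `n`
variables is a sum of squares of polynomials. -/
def SCone (n : ℕ) (k : ℕ) : Set (Nat.Partition k → ℝ) :=
  {c | IsSumSq (symForm n c)}

/-!
Write `n = q m + r` with `r < m`. Substituting each of `m` variables for `q` of the `n` variables
and zero for the remaining `r` turns `p_i^{(n)}` into `(q m / n) p_i^{(m)}` and preserves sums of
squares. So if `c` lies in the cone for infinitely many `n`, then `c_λ (q m / n)^{l(λ)}` lies in the
cone for `m`, and since `q m / n → 1` it remains to see that each cone is closed.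

Closedness holds for sums of squares in any finite-dimensional space of polynomials: leading
terms of squares cannot cancel, so the polynomials being squared have bounded degree, and
evaluation on a large enough grid identifies polynomials of bounded degree with functions on a
finite set. There Carathéodory's theorem bounds the number of squares, and `(u_j) ↦ ∑ u_j ^ 2` is a
proper map.
-/

theorem isSumSq_map {R S F : Type*} [NonUnitalNonAssocSemiring R] [NonUnitalNonAssocSemiring S]
    [FunLike F R S] [NonUnitalRingHomClass F R S] (φ : F) {f : R} (hf : IsSumSq f) :
    IsSumSq (φ f) := by
  induction hf with
  | zero => simp
  | sq_add a _ ih => simpa only [map_add, map_mul] using ih.sq_add (φ a)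

section Caratheodory

variable {𝕜 E : Type*} [Field 𝕜] [LinearOrder 𝕜] [IsStrictOrderedRing 𝕜] [AddCommGroup E]
  [Module 𝕜 E] {s : Set E}

open scoped Pointwise in
theorem closure_subset_convexHull (h0 : (0 : E) ∈ s)
    (hs : ∀ c : 𝕜, 0 ≤ c → ∀ x ∈ s, c • x ∈ s) :
    (AddSubmonoid.closure s : Set E) ⊆ convexHull 𝕜 s := by
  have two_smul_mem {x : E} (hx : x ∈ convexHull 𝕜 s) : (2 : 𝕜) • x ∈ convexHull 𝕜 s := by
    have : (2 : 𝕜) • s ⊆ s := Set.smul_set_subset_iff.2 fun x hx => hs 2 zero_le_two x hx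
    exact convexHull_mono this (convexHull_smul (2 : 𝕜) s ▸ Set.smul_mem_smul_set hx)
  intro x hx
  induction hx using AddSubmonoid.closure_induction with
  | mem x hx => exact subset_convexHull 𝕜 s hx
  | zero => exact subset_convexHull 𝕜 s h0
  | add x y _ _ hx hy =>
    have := convex_convexHull 𝕜 s (two_smul_mem hx) (two_smul_mem hy) (inv_nonneg.2 zero_le_two)
      (inv_nonneg.2 zero_le_two) (by norm_num)
    simpa using this

theorem exists_fin_sum_eq_of_mem_closure [FiniteDimensional 𝕜 E] (h0 : (0 : E) ∈ s)
    (hs : ∀ c : 𝕜, 0 ≤ c → ∀ x ∈ s, c • x ∈ s) {x : E} (hx : x ∈ AddSubmonoid.closure s) :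
    ∃ k ≤ Module.finrank 𝕜 E + 1, ∃ y : Fin k → E, (∀ i, y i ∈ s) ∧ ∑ i, y i = x := by
  obtain ⟨ι, _, z, w, hzs, hz, hw, -, rfl⟩ :=
    eq_pos_convex_span_of_mem_convexHull (closure_subset_convexHull h0 hs hx)
  let e := (Fintype.equivFin ι).symm
  refine ⟨Fintype.card ι, ?_, fun i => w (e i) • z (e i), fun i => ?_, ?_⟩
  · exact hz.card_le_finrank_succ.trans (Nat.add_le_add_right (Submodule.finrank_le _) 1)
  · exact hs _ (hw _).le _ (hzs ⟨_, rfl⟩)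
  · exact e.sum_comp fun i => w i • z i

end Caratheodory

/-- The cone of sums of squares of elements of a linear subspace `U` of an algebra. -/
def sqCone {R A : Type*} [CommSemiring R] [Semiring A] [Algebra R A] (U : Submodule R A) :
    AddSubmonoid A :=
  AddSubmonoid.closure ((fun u => u * u) '' U)

theorem map_sqCone {R A B : Type*} [CommSemiring R] [Semiring A] [Algebra R A] [Semiring B]
    [Algebra R B] (φ : A →ₐ[R] B) (U : Submodule R A) :
    (sqCone U).map φ = sqCone (U.map φ.toLinearMap) := by
  simp [sqCone, AddMonoidHom.map_mclosure, Set.image_image]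

theorem smul_mem_image_mul_self {A : Type*} [Semiring A] [Algebra ℝ A] (U : Submodule ℝ A) {c : ℝ}
    (hc : 0 ≤ c) {v : A} (hv : v ∈ (fun u => u * u) '' (U : Set A)) :
    c • v ∈ (fun u => u * u) '' (U : Set A) := by
  obtain ⟨u, hu, rfl⟩ := hv
  exact ⟨√c • u, U.smul_mem _ hu, by simp [smul_smul, Real.mul_self_sqrt hc]⟩

section FunctionSpaces

variable {ι : Type*}

theorem norm_sq_le_norm_sum_mul_self {κ : Type*} [Fintype ι] [Fintype κ] (u : κ → ι → ℝ) :
    ‖u‖ ^ 2 ≤ ‖∑ j, u j * u j‖ := by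
  refine (Real.le_sqrt (norm_nonneg _) (norm_nonneg _)).1 ?_
  refine (pi_norm_le_iff_of_nonneg (Real.sqrt_nonneg _)).2 fun j => ?_
  refine (pi_norm_le_iff_of_nonneg (Real.sqrt_nonneg _)).2 fun i => Real.abs_le_sqrt ?_
  calc u j i ^ 2 = u j i * u j i := sq _
    _ ≤ ∑ j, u j i * u j i :=
      Finset.single_le_sum (fun j _ => mul_self_nonneg (u j i)) (Finset.mem_univ j)
    _ = (∑ j, u j * u j) i := by simp
    _ ≤ ‖∑ j, u j * u j‖ := (Real.le_norm_self _).trans (norm_le_pi_norm (∑ j, u j * u j) i)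

theorem isProperMap_sum_mul_self {κ : Type*} [Finite ι] [Fintype κ] :
    IsProperMap fun u : κ → ι → ℝ => ∑ j, u j * u j := by
  have := Fintype.ofFinite ι
  refine isProperMap_iff_tendsto_cocompact.2 ⟨by fun_prop, ?_⟩
  rw [← Metric.cobounded_eq_cocompact, ← Metric.cobounded_eq_cocompact,
    ← tendsto_norm_atTop_iff_cobounded]
  exact Filter.tendsto_atTop_mono norm_sq_le_norm_sum_mul_self
    ((Filter.tendsto_pow_atTop two_ne_zero).comp tendsto_norm_cobounded_atTop)

variable [Finite ι] (U : Submodule ℝ (ι → ℝ))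

theorem sqCone_eq_biUnion : (sqCone U : Set (ι → ℝ)) =
    ⋃ k ∈ Set.Iic (Module.finrank ℝ (ι → ℝ) + 1),
      (fun u : Fin k → ι → ℝ => ∑ j, u j * u j) '' Set.univ.pi fun _ => U := by
  refine Set.Subset.antisymm (fun v hv => ?_) (Set.iUnion₂_subset ?_)
  · have h0 : (0 : ι → ℝ) ∈ (fun u => u * u) '' (U : Set (ι → ℝ)) := ⟨0, U.zero_mem, mul_zero 0⟩
    obtain ⟨k, hk, y, hy, rfl⟩ := exists_fin_sum_eq_of_mem_closure (𝕜 := ℝ) h0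
      (fun _ hc _ => smul_mem_image_mul_self U hc) hv
    choose u hu huy using hy
    exact Set.mem_biUnion hk ⟨u, fun j _ => hu j, Finset.sum_congr rfl fun j _ => huy j⟩
  · rintro k - _ ⟨u, hu, rfl⟩
    exact sum_mem fun j _ => AddSubmonoid.subset_closure ⟨u j, hu j trivial, rfl⟩

theorem isClosed_sqCone : IsClosed (sqCone U : Set (ι → ℝ)) := by
  rw [sqCone_eq_biUnion]
  exact (Set.finite_Iic _).isClosed_biUnion fun k _ => isProperMap_sum_mul_self.isClosedMap _
    (isClosed_set_pi fun _ _ => U.closed_of_finiteDimensional)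

end FunctionSpaces

section Degree

open scoped MonomialOrder

theorem coeff_nonneg_of_degree_le {σ R : Type*} [CommSemiring R] [Preorder R] (m : MonomialOrder σ)
    {a : MvPolynomial σ R} (ha : 0 ≤ m.leadingCoeff a) {D : σ →₀ ℕ}
    (hD : m.degree a ≼[m] D) : 0 ≤ a.coeff D := by
  rcases hD.eq_or_lt with h | h
  · exact m.toSyn.injective h ▸ ha
  · exact (m.coeff_eq_zero_of_lt h).ge

variable {σ R : Type*} [CommRing R] [LinearOrder R] [IsStrictOrderedRing R]

section MonomialOrder

variable (m : MonomialOrder σ) {a b f : MvPolynomial σ R}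

-- Nonnegative leading coefficients cannot cancel.
theorem degree_le_degree_add (ha : 0 ≤ m.leadingCoeff a) (hb : 0 ≤ m.leadingCoeff b) :
    m.degree a ≼[m] m.degree (a + b) := by
  rcases lt_or_ge (m.toSyn (m.degree a)) (m.toSyn (m.degree b)) with h | h
  · exact (m.degree_add_eq_right_of_lt h).symm ▸ h.le
  rcases ha.eq_or_lt with h0 | h0
  · simp [m.leadingCoeff_eq_zero_iff.1 h0.symm]
  · refine m.le_degree (mem_support_iff.2 ?_)
    rw [coeff_add]
    exact (add_pos_of_pos_of_nonneg h0 (coeff_nonneg_of_degree_le m hb h)).ne'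

theorem leadingCoeff_add_nonneg (ha : 0 ≤ m.leadingCoeff a) (hb : 0 ≤ m.leadingCoeff b) :
    0 ≤ m.leadingCoeff (a + b) := by
  rw [MonomialOrder.leadingCoeff, coeff_add]
  exact add_nonneg (coeff_nonneg_of_degree_le m ha (degree_le_degree_add m ha hb))
    (coeff_nonneg_of_degree_le m hb (add_comm b a ▸ degree_le_degree_add m hb ha))

theorem leadingCoeff_nonneg_of_isSumSq (hf : IsSumSq f) : 0 ≤ m.leadingCoeff f := by
  induction hf with
  | zero => simp
  | sq_add a _ ih =>
    exact leadingCoeff_add_nonneg m (by rw [m.leadingCoeff_mul]; exact mul_self_nonneg _) ih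

end MonomialOrder

theorem totalDegree_le_totalDegree_add_of_isSumSq {a b : MvPolynomial σ R} (ha : IsSumSq a)
    (hb : IsSumSq b) : a.totalDegree ≤ (a + b).totalDegree := by
  obtain ⟨_, _⟩ := exists_wellFoundedLT σ
  have dual_wellFoundedGT : WellFoundedGT σᵒᵈ := inferInstance
  let : LinearOrder σ := OrderDual.instLinearOrder σ
  have : WellFoundedGT σ := dual_wellFoundedGT
  exact degLex_totalDegree_monotone <| degree_le_degree_add _ (leadingCoeff_nonneg_of_isSumSq _ ha)
    (leadingCoeff_nonneg_of_isSumSq _ hb)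

theorem mem_sqCone_restrictTotalDegree_iff {d : ℕ} {f : MvPolynomial σ R} :
    f ∈ sqCone (restrictTotalDegree σ R d) ↔ IsSumSq f ∧ f.totalDegree ≤ 2 * d := by
  constructor
  · intro hf
    induction hf using AddSubmonoid.closure_induction with
    | mem f hf =>
      obtain ⟨q, hq, rfl⟩ := hf
      have hqd : q.totalDegree ≤ d := (mem_restrictTotalDegree _ _ _).1 hq
      exact ⟨.mul_self q, (totalDegree_mul _ _).trans (by lia)⟩
    | zero => simp
    | add f g _ _ hf hg =>
      exact ⟨hf.1.add hg.1, (totalDegree_add _ _).trans (max_le hf.2 hg.2)⟩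
  · rintro ⟨hf, hd⟩
    induction hf with
    | zero => exact zero_mem _
    | @sq_add a s hs ih =>
      have ha : (a * a).totalDegree ≤ 2 * d :=
        (totalDegree_le_totalDegree_add_of_isSumSq (.mul_self a) hs).trans hd
      have hsd : s.totalDegree ≤ 2 * d :=
        (totalDegree_le_totalDegree_add_of_isSumSq hs (.mul_self a)).trans (add_comm s _ ▸ hd)
      refine add_mem (AddSubmonoid.subset_closure ⟨a, ?_, rfl⟩) (ih hsd)
      rw [SetLike.mem_coe, mem_restrictTotalDegree]
      rcases eq_or_ne a 0 with rfl | ha0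
      · simp
      · rw [totalDegree_mul_of_isDomain ha0 ha0] at ha
        lia

end Degree

theorem exists_le_restrictTotalDegree_of_fg {σ R : Type*} [CommSemiring R]
    {W : Submodule R (MvPolynomial σ R)} (hW : W.FG) : ∃ d, W ≤ restrictTotalDegree σ R d := by
  obtain ⟨s, rfl⟩ := hW
  exact ⟨s.sup totalDegree, Submodule.span_le.2 fun f hf =>
    (mem_restrictTotalDegree _ _ _).2 (Finset.le_sup (f := totalDegree) hf)⟩

section GridEvaluation

variable {σ : Type*}

/-- Evaluation of a polynomial on the grid `{0, …, N - 1}^σ`, used to realize polynomials of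
bounded degree as functions on a finite set. -/
noncomputable def gridEval (σ : Type*) (N : ℕ) : MvPolynomial σ ℝ →ₐ[ℝ] ((σ → Fin N) → ℝ) :=
  AlgHom.pi fun g => aeval fun i => ((g i : ℕ) : ℝ)

theorem injOn_gridEval [Finite σ] (N : ℕ) :
    Set.InjOn (gridEval σ N) {f | f.totalDegree < N} := by
  intro p hp q hq h
  rw [← sub_eq_zero]
  refine eq_zero_of_eval_zero_at_prod_finset _
    (fun _ => (Finset.range N).map ⟨Nat.cast, Nat.cast_injective⟩) (fun i => ?_) fun x hx => ?_
  · rw [Finset.card_map, Finset.card_range]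
    exact (degreeOf_le_totalDegree _ i).trans_lt ((totalDegree_sub _ _).trans_lt (max_lt hp hq))
  · simp only [Finset.mem_map, Finset.mem_range, Function.Embedding.coeFn_mk] at hx
    choose g hg hgx using hx
    obtain rfl : (fun i => (g i : ℝ)) = x := _root_.funext hgx
    have := congrFun h fun i => ⟨g i, hg i⟩
    rw [map_sub, sub_eq_zero]
    simpa [gridEval, aeval_eq_eval] using this

theorem isSumSq_iff_gridEval_mem_sqCone [Finite σ] {d : ℕ} {f : MvPolynomial σ ℝ}
    (hf : f.totalDegree ≤ 2 * d) : IsSumSq f ↔ gridEval σ (2 * d + 1) f ∈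
      sqCone ((restrictTotalDegree σ ℝ d).map (gridEval σ (2 * d + 1)).toLinearMap) := by
  rw [← map_sqCone, AddSubmonoid.mem_map]
  constructor
  · exact fun h => ⟨f, mem_sqCone_restrictTotalDegree_iff.2 ⟨h, hf⟩, rfl⟩
  · rintro ⟨g, hg, hgf⟩
    obtain ⟨hgsq, hgd⟩ := mem_sqCone_restrictTotalDegree_iff.1 hg
    exact injOn_gridEval _ (Nat.lt_succ_of_le hgd) (Nat.lt_succ_of_le hf) hgf ▸ hgsq

theorem isClosed_setOf_isSumSq_apply [Finite σ] {E : Type*} [AddCommGroup E]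
    [Module ℝ E] [TopologicalSpace E] [IsTopologicalAddGroup E] [ContinuousSMul ℝ E] [T2Space E]
    [FiniteDimensional ℝ E] (L : E →ₗ[ℝ] MvPolynomial σ ℝ) : IsClosed {x | IsSumSq (L x)} := by
  obtain ⟨d, hd⟩ := exists_le_restrictTotalDegree_of_fg (W := LinearMap.range L) .of_finite
  have hdeg (x : E) : (L x).totalDegree ≤ 2 * d :=
    ((mem_restrictTotalDegree _ _ _).1 (hd (LinearMap.mem_range_self L x))).trans (by lia)
  simp only [isSumSq_iff_gridEval_mem_sqCone (hdeg _)]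
  exact (isClosed_sqCone _).preimage
    ((gridEval σ (2 * d + 1)).toLinearMap ∘ₗ L).continuous_of_finiteDimensional

end GridEvaluation

section SymmetricForms

variable {m n k : ℕ}

theorem symForm_eq_linearCombination (c : Nat.Partition k → ℝ) :
    symForm n c = Fintype.linearCombination ℝ (pPart n) c := by
  simp only [symForm, Fintype.linearCombination_apply, C_mul']

theorem isClosed_SCone (n k : ℕ) : IsClosed (SCone n k) := by
  simp only [SCone, symForm_eq_linearCombination]
  exact isClosed_setOf_isSumSq_apply _

/-- The coefficient vector of the form obtained from `∑ c_λ p_λ` by replacing every power sum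
`p_i` with `t p_i`. -/
def scaleCoeffs (t : ℝ) (c : Nat.Partition k → ℝ) : Nat.Partition k → ℝ :=
  fun lam => t ^ lam.parts.card * c lam

theorem scaleCoeffs_one (c : Nat.Partition k → ℝ) : scaleCoeffs 1 c = c := by
  funext lam
  simp [scaleCoeffs]

theorem continuous_scaleCoeffs (c : Nat.Partition k → ℝ) :
    Continuous fun t => scaleCoeffs t c := by
  unfold scaleCoeffs
  fun_prop

theorem map_symForm {φ : MvPolynomial (Fin n) ℝ →ₐ[ℝ] MvPolynomial (Fin m) ℝ} {t : ℝ}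
    (hφ : ∀ i ≠ 0, φ (_root_.psum n i) = C t * _root_.psum m i) (c : Nat.Partition k → ℝ) :
    φ (symForm n c) = symForm m (scaleCoeffs t c) := by
  have map_pPart (lam : Nat.Partition k) :
      φ (pPart n lam) = C (t ^ lam.parts.card) * pPart m lam := by
    have map_parts : lam.parts.map (fun i => φ (_root_.psum n i)) =
        lam.parts.map fun i => C t * _root_.psum m i :=
      Multiset.map_congr rfl fun i hi => hφ i (lam.parts_pos hi).ne'
    rw [pPart, map_multiset_prod, Multiset.map_map, Function.comp_def, map_parts,
      Multiset.prod_map_mul, Multiset.map_const', Multiset.prod_replicate, ← C_pow, pPart]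
  simp only [symForm, map_sum, map_mul, map_pPart, scaleCoeffs, algHom_C, algebraMap_eq]
  exact Finset.sum_congr rfl fun lam _ => by ring

theorem scaleCoeffs_mem_SCone {φ : MvPolynomial (Fin n) ℝ →ₐ[ℝ] MvPolynomial (Fin m) ℝ} {t : ℝ}
    (hφ : ∀ i ≠ 0, φ (_root_.psum n i) = C t * _root_.psum m i) {c : Nat.Partition k → ℝ}
    (hc : c ∈ SCone n k) : scaleCoeffs t c ∈ SCone m k := by
  rw [SCone, Set.mem_ofPred_eq, ← map_symForm hφ]
  exact isSumSq_map φ hc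

/-- The substitution in `q * m + r` variables that sends `q` variables to each of the `m` new
variables and the remaining `r` to zero. -/
noncomputable def collapse (q m r : ℕ) :
    MvPolynomial (Fin (q * m + r)) ℝ →ₐ[ℝ] MvPolynomial (Fin m) ℝ :=
  aeval (Fin.append (fun j : Fin (q * m) => X j.modNat) 0)

theorem sum_X_modNat_pow (q m i : ℕ) :
    ∑ j : Fin (q * m), (X j.modNat : MvPolynomial (Fin m) ℝ) ^ i = C (q : ℝ) * ∑ j, X j ^ i :=
  calc ∑ j : Fin (q * m), (X j.modNat : MvPolynomial (Fin m) ℝ) ^ i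
    _ = ∑ p : Fin q × Fin m, X p.2 ^ i :=
      finProdFinEquiv.symm.sum_comp fun p : Fin q × Fin m => (X p.2 : MvPolynomial (Fin m) ℝ) ^ i
    _ = C (q : ℝ) * ∑ j, X j ^ i := by simp [Fintype.sum_prod_type]

theorem collapse_psum (q r : ℕ) (hm : m ≠ 0) {i : ℕ} (hi : i ≠ 0) :
    collapse q m r (_root_.psum (q * m + r) i) =
      C ((q * m : ℕ) / (q * m + r : ℕ) : ℝ) * _root_.psum m i := by
  have collapse_sum : collapse q m r (∑ j, X j ^ i) = C (q : ℝ) * ∑ j, X j ^ i := by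
    rw [← sum_X_modNat_pow, map_sum, Fin.sum_univ_add]
    simp [collapse, hi]
  have hm' : (m : ℝ) ≠ 0 := Nat.cast_ne_zero.2 hm
  have coeff_eq : ((q * m + r : ℕ) : ℝ)⁻¹ * q = (q * m : ℕ) / (q * m + r : ℕ) * (m : ℝ)⁻¹ := by
    push_cast
    field_simp
  rw [_root_.psum, _root_.psum, map_mul, algHom_C, algebraMap_eq, collapse_sum, ← mul_assoc,
    ← mul_assoc, ← C_mul, ← C_mul, coeff_eq]

theorem SCone_subset_SCone_zero (n k : ℕ) : SCone n k ⊆ SCone 0 k := by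
  intro c hc
  have hφ (i : ℕ) (hi : i ≠ 0) :
      aeval (0 : Fin n → MvPolynomial (Fin 0) ℝ) (_root_.psum n i) = C 1 * _root_.psum 0 i := by
    simp [_root_.psum, hi]
  exact scaleCoeffs_one c ▸ scaleCoeffs_mem_SCone hφ hc

end SymmetricForms

theorem tendsto_div_mul_div_atTop {m : ℕ} (hm : m ≠ 0) :
    Filter.Tendsto (fun n : ℕ => ((n / m * m : ℕ) / n : ℝ)) Filter.atTop (nhds 1) := by
  have hm' : (m : ℝ) ≠ 0 := Nat.cast_ne_zero.2 hm
  have h := ((tendsto_nat_floor_mul_div_atTop (R := ℝ) (a := (m : ℝ)⁻¹) (by positivity)).comp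
    tendsto_natCast_atTop_atTop).mul_const (m : ℝ)
  rw [inv_mul_cancel₀ hm'] at h
  refine h.congr fun n => ?_
  simp only [Function.comp_apply]
  rw [inv_mul_eq_div, Nat.floor_div_natCast, Nat.floor_natCast]
  push_cast
  ring

theorem mem_SCone_of_frequently {k : ℕ} {c : Nat.Partition k → ℝ}
    (hc : ∃ᶠ n in Filter.atTop, c ∈ SCone n k) (m : ℕ) : c ∈ SCone m k := by
  rcases eq_or_ne m 0 with rfl | hm
  · obtain ⟨n, hn⟩ := hc.exists
    exact SCone_subset_SCone_zero n k hn
  have hlim : Filter.Tendsto (fun n : ℕ => scaleCoeffs ((n / m * m : ℕ) / n) c) Filter.atTop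
      (nhds c) := by
    simpa only [Function.comp_def, scaleCoeffs_one] using
      ((continuous_scaleCoeffs c).tendsto 1).comp (tendsto_div_mul_div_atTop hm)
  refine (isClosed_SCone m k).mem_of_frequently_of_tendsto (hc.mono fun n hn => ?_) hlim
  rw [← Nat.div_add_mod' n m] at hn
  have := scaleCoeffs_mem_SCone (fun i hi => collapse_psum _ _ hm hi) hn
  rwa [Nat.div_add_mod'] at this

theorem limit_SCone_general (N₀ k : ℕ) :
    ((⋃ N ∈ {N : ℕ | N₀ ≤ N}, ⋂ n ∈ {n : ℕ | N ≤ n}, SCone n k) =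
        ⋂ n ∈ {n : ℕ | N₀ ≤ n}, SCone n k) ∧
    ((⋂ N ∈ {N : ℕ | N₀ ≤ N}, ⋃ n ∈ {n : ℕ | N ≤ n}, SCone n k) =
        ⋂ n ∈ {n : ℕ | N₀ ≤ n}, SCone n k) := by
  have inter_subset_liminf : (⋂ n ∈ {n | N₀ ≤ n}, SCone n k) ⊆
      ⋃ N ∈ {N | N₀ ≤ N}, ⋂ n ∈ {n | N ≤ n}, SCone n k :=
    Set.subset_biUnion_of_mem (u := fun N => ⋂ n ∈ {n | N ≤ n}, SCone n k) (le_refl N₀)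
  have liminf_subset_limsup : (⋃ N ∈ {N | N₀ ≤ N}, ⋂ n ∈ {n | N ≤ n}, SCone n k) ⊆
      ⋂ N ∈ {N | N₀ ≤ N}, ⋃ n ∈ {n | N ≤ n}, SCone n k := by
    intro c hc
    simp only [Set.mem_iUnion, Set.mem_iInter, Set.mem_ofPred_eq] at hc ⊢
    obtain ⟨M, -, hM⟩ := hc
    exact fun N _ => ⟨max M N, le_max_right M N, hM _ (le_max_left M N)⟩
  have limsup_subset_inter : (⋂ N ∈ {N | N₀ ≤ N}, ⋃ n ∈ {n | N ≤ n}, SCone n k) ⊆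
      ⋂ n ∈ {n | N₀ ≤ n}, SCone n k := by
    intro c hc
    simp only [Set.mem_iUnion, Set.mem_iInter, Set.mem_ofPred_eq] at hc ⊢
    refine fun m _ => mem_SCone_of_frequently (Filter.frequently_atTop.2 fun N => ?_) m
    obtain ⟨n, hn, hcn⟩ := hc (max N N₀) (le_max_right N N₀)
    exact ⟨n, (le_max_left N N₀).trans hn, hcn⟩
  exact ⟨(liminf_subset_limsup.trans limsup_subset_inter).antisymm inter_subset_liminf,
    limsup_subset_inter.antisymm (inter_subset_liminf.trans liminf_subset_limsup)⟩

/-- The set-theoretic limit of the cones `Σ^S_{n,2d} ⊆ ℝ^{π(2d)}` exists and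
equals their intersection `⋂_{n ≥ 2d} Σ^S_{n,2d}`. -/
theorem limit_SCone (d : ℕ) :
    ((⋃ N ∈ {N : ℕ | 2 * d ≤ N}, ⋂ n ∈ {n : ℕ | N ≤ n}, SCone n (2 * d)) =
        ⋂ n ∈ {n : ℕ | 2 * d ≤ n}, SCone n (2 * d)) ∧
    ((⋂ N ∈ {N : ℕ | 2 * d ≤ N}, ⋃ n ∈ {n : ℕ | N ≤ n}, SCone n (2 * d)) =
        ⋂ n ∈ {n : ℕ | 2 * d ≤ n}, SCone n (2 * d)) :=
  limit_SCone_general (2 * d) (2 * d)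
end

section
/- Let d ≥ 2, n ≥ 2d, and let f = Σ_{λ⊢2d} c_λ p_λ^{(n)} be a symmetric form of degree 2d in n variables. Then f is nonnegative on ℝ^n if and only if for every w ∈ W_n the d-variate form t ↦ Φ_f(w, t) is nonnegative on ℝ^d, where W_n := {w ∈ ℝ^d : n·w_i ∈ ℕ∪{0} for all i and w_1 + ⋯ + w_d = 1}. -/
open MvPolynomial

/-- `Φ_λ(s,t) = ∏_{i=1}^l (s_1 t_1^{λ_i} + ⋯ + s_d t_d^{λ_i})` for a partition
`λ = (λ_1,…,λ_l)` of `k`, as a function on `ℝ^d × ℝ^d`. -/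
noncomputable def phiPart {k : ℕ} (d : ℕ) (lam : Nat.Partition k) (s t : Fin d → ℝ) : ℝ :=
  (lam.parts.map (fun i => ∑ j : Fin d, s j * t j ^ i)).prod

/-- `Φ_c = Σ_{λ ⊢ k} c_λ Φ_λ`. -/
noncomputable def phiForm {k : ℕ} (d : ℕ) (c : Nat.Partition k → ℝ) (s t : Fin d → ℝ) : ℝ :=
  ∑ lam : Nat.Partition k, c lam * phiPart d lam s t

/-!
The proof is a half-degree principle. Fix the elementary symmetric values `e_1, …, e_d` of a point
`x`; since `d ≥ 2` these determine `∑ x_j ^ 2`, so the fibre through `x` is compact. If a point `m`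
of it has more than `d` distinct coordinates, the polynomial `∏ (T - m_j)` can be perturbed to
`∏ (T - m_j) ± ε R`, with `R` monic of degree `n - (d + 1)`, without losing real roots: this moves
`m` inside its fibre in two opposite directions of `e`-space. A symmetric form of degree at most
`2d` is affine along such a pencil, since by weight no monomial in the `e_i` can contain two of
those with `i > d`. So a minimiser of the form on the fibre at which `e_{d+1}` is largest has at
most `d` distinct coordinates, and on such points the form takes exactly the values `Φ_f(w, t)`,
where `w ∈ W_n` is the vector of frequencies of the coordinates.
-/

section MidpointFiltration

variable {σ R : Type*} [CommRing R] {d v w : ℕ} {x y z : σ → R} {p q : MvPolynomial σ R}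

/-- The polynomials whose values at `y`, `x`, `z` are those of a weighted form of degree `w` at
three points of a line, the middle one the midpoint, on which the coordinates of weight at most `d`
are constant: the values at `y` and `z` average to the value at `x` when `w ≤ 2 * d`, and all three
coincide when `w ≤ d`. It tracks how symmetric forms vary along such a line in `e`-space. -/
def midpointFiltration (d : ℕ) (x y z : σ → R) (w : ℕ) : Submodule R (MvPolynomial σ R) where
  carrier := {p | (w ≤ d → eval y p = eval x p ∧ eval z p = eval x p) ∧
    (w ≤ 2 * d → eval y p + eval z p = 2 * eval x p)}
  zero_mem' := by simp
  add_mem' := by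
    rintro p q ⟨hp, hp'⟩ ⟨hq, hq'⟩
    simp only [Set.mem_ofPred_eq, map_add]
    exact ⟨fun hw => by rw [(hp hw).1, (hp hw).2, (hq hw).1, (hq hw).2]; exact ⟨rfl, rfl⟩,
      fun hw => by linear_combination hp' hw + hq' hw⟩
  smul_mem' := by
    rintro r p ⟨hp, hp'⟩
    simp only [Set.mem_ofPred_eq, smul_eval]
    exact ⟨fun hw => by rw [(hp hw).1, (hp hw).2]; exact ⟨rfl, rfl⟩,
      fun hw => by linear_combination r * hp' hw⟩

namespace midpointFiltration

theorem C_mem (r : R) : C r ∈ midpointFiltration d x y z w :=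
  ⟨fun _ => by simp, fun _ => by simp [two_mul]⟩

theorem mul_mem (hp : p ∈ midpointFiltration d x y z v) (hq : q ∈ midpointFiltration d x y z w) :
    p * q ∈ midpointFiltration d x y z (v + w) := by
  obtain ⟨hp, hp'⟩ := hp
  obtain ⟨hq, hq'⟩ := hq
  refine ⟨fun hvw => ?_, fun hvw => ?_⟩
  · obtain ⟨hpy, hpz⟩ := hp (by lia)
    obtain ⟨hqy, hqz⟩ := hq (by lia)
    simp only [map_mul, hpy, hpz, hqy, hqz, and_self]
  · simp only [map_mul]
    obtain hv | hw : v ≤ d ∨ w ≤ d := by lia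
    · obtain ⟨hpy, hpz⟩ := hp hv
      rw [hpy, hpz]
      linear_combination eval x p * hq' (by lia)
    · obtain ⟨hqy, hqz⟩ := hq hw
      rw [hqy, hqz]
      linear_combination eval x q * hp' (by lia)

theorem C_mul_mem (r : R) (hp : p ∈ midpointFiltration d x y z w) :
    C r * p ∈ midpointFiltration d x y z w := by
  rw [C_mul']
  exact Submodule.smul_mem _ r hp

theorem multiset_prod_map_mem {f : ℕ → MvPolynomial σ R}
    (hf : ∀ i, f i ∈ midpointFiltration d x y z i) (s : Multiset ℕ) :
    (s.map f).prod ∈ midpointFiltration d x y z s.sum := by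
  induction s using Multiset.induction with
  | empty => simpa using C_mem (w := 0) (1 : R)
  | cons i s ih =>
    rw [Multiset.map_cons, Multiset.prod_cons, Multiset.sum_cons]
    exact mul_mem (hf i) ih

theorem psum_mem [Fintype σ] (he : ∀ i, esymm σ R i ∈ midpointFiltration d x y z i) (k : ℕ) :
    MvPolynomial.psum σ R k ∈ midpointFiltration d x y z k := by
  induction k using Nat.strong_induction_on with
  | _ k ih =>
    rcases Nat.eq_zero_or_pos k with rfl | hk
    · rw [psum_zero, ← map_natCast C]
      exact C_mem _
    rw [psum_eq_mul_esymm_sub_sum σ R k hk]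
    refine Submodule.sub_mem _ ?_ (Submodule.sum_mem _ fun a ha => ?_)
    · simpa using C_mul_mem ((-1 : R) ^ (k + 1) * k) (he k)
    · simp only [Finset.mem_filter, Finset.HasAntidiagonal.mem_antidiagonal, Set.mem_Ioo] at ha
      obtain ⟨rfl, ha_pos, -⟩ := ha
      rw [mul_assoc]
      simpa using C_mul_mem ((-1 : R) ^ a.1) (mul_mem (he a.1) (ih a.2 (by lia)))

theorem symForm_mem {n k : ℕ} {x y z : Fin n → ℝ}
    (he : ∀ i, esymm (Fin n) ℝ i ∈ midpointFiltration d x y z i) (c : Nat.Partition k → ℝ) :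
    symForm n c ∈ midpointFiltration d x y z k := by
  refine Submodule.sum_mem _ fun lam _ => C_mul_mem _ ?_
  have h := multiset_prod_map_mem (fun i => C_mul_mem (n : ℝ)⁻¹ (psum_mem he i)) lam.parts
  rwa [lam.parts_sum] at h

end midpointFiltration

end MidpointFiltration

section Perturbation

open Lagrange Topology Finset

theorem nodal_eq_of_monic {ι F : Type*} [CommRing F] [IsDomain F] {s : Finset ι} {v : ι → F}
    {p : Polynomial F} (hv : Set.InjOn v s) (hp : p.Monic) (hdeg : p.natDegree = #s)
    (hroot : ∀ i ∈ s, p.eval (v i) = 0) : nodal s v = p := by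
  refine Polynomial.eq_of_degree_le_of_eval_index_eq s hv (by simp) ?_ ?_ fun i hi => ?_
  · rw [degree_nodal, Polynomial.degree_eq_natDegree hp.ne_zero, hdeg]
  · rw [nodal_monic.leadingCoeff, hp.leadingCoeff]
  · rw [eval_nodal_at_node hi, hroot i hi]

theorem nodal_mul_nodal_compl {ι R : Type*} [Fintype ι] [DecidableEq ι] [CommRing R]
    (J : Finset ι) (v : ι → R) : nodal J v * nodal Jᶜ v = nodal univ v :=
  prod_mul_prod_compl J _

variable {ι 𝕜 : Type*} [NontriviallyNormedField 𝕜] [CompleteSpace 𝕜] {J : Finset ι} {x : ι → 𝕜}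

theorem map_nhds_eval_nodal_eq_nhds_zero (hx : Set.InjOn x J) {j : ι} (hj : j ∈ J) :
    (𝓝 (x j)).map (fun a => (nodal J x).eval a) = 𝓝 0 := by
  classical
  have hderiv : (nodal J x).derivative.eval (x j) ≠ 0 := by
    rw [eval_nodal_derivative_eval_node_eq hj]
    refine eval_nodal_not_at_node fun i hi h => ?_
    exact ne_of_mem_erase hi (hx (mem_of_mem_erase hi) hj h.symm)
  simpa only [eval_nodal_at_node hj] using
    ((nodal J x).hasStrictDerivAt (x j)).map_nhds_eq hderiv

theorem eventually_exists_nodal_eq_sub_C (hJ : J.Nonempty) (hx : Set.InjOn x J) :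
    ∀ᶠ ε in 𝓝 (0 : 𝕜), ∃ r : ι → 𝕜, nodal J r = nodal J x - Polynomial.C ε := by
  classical
  obtain ⟨U, hU, hU_disj⟩ := (J.image x).finite_toSet.t2_separation
  have hnear : ∀ j ∈ J, ∀ᶠ ε in 𝓝 (0 : 𝕜), ∃ b ∈ U (x j), (nodal J x).eval b = ε := by
    intro j hj
    rw [← map_nhds_eval_nodal_eq_nhds_zero hx hj]
    exact Filter.image_mem_map ((hU (x j)).2.mem_nhds (hU (x j)).1)
  filter_upwards [(Filter.eventually_all_finset J).2 hnear] with ε hε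
  choose! r hrU hr using hε
  have hr_inj : Set.InjOn r J := by
    intro i hi j hj hij
    by_contra hne
    have hxne : x i ≠ x j := fun h => hne (hx hi hj h)
    refine Set.disjoint_left.1 (hU_disj ?_ ?_ hxne) (hrU i hi) (hij ▸ hrU j hj)
    · exact mem_image_of_mem x hi
    · exact mem_image_of_mem x hj
  have hC : (Polynomial.C ε).degree < (nodal J x).degree := by
    rw [degree_nodal]
    exact Polynomial.degree_C_le.trans_lt (by exact_mod_cast hJ.card_pos)
  refine ⟨r, nodal_eq_of_monic hr_inj (nodal_monic.sub_of_left hC) ?_ fun j hj => ?_⟩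
  · rw [Polynomial.natDegree_sub_C, natDegree_nodal]
  · rw [Polynomial.eval_sub, Polynomial.eval_C, hr j hj, sub_self]

theorem eventually_exists_nodal_univ_eq [Fintype ι] [DecidableEq ι] (hJ : J.Nonempty)
    (hx : Set.InjOn x J) :
    ∀ᶠ ε in 𝓝 (0 : 𝕜), ∃ y : ι → 𝕜,
      nodal univ y = nodal univ x - Polynomial.C ε * nodal Jᶜ x := by
  filter_upwards [eventually_exists_nodal_eq_sub_C hJ hx] with ε ⟨r, hr⟩
  have hy_J : nodal J (J.piecewise r x) = nodal J r :=
    prod_congr rfl fun j hj => by rw [piecewise_eq_of_mem _ _ _ hj]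
  have hy_compl : nodal Jᶜ (J.piecewise r x) = nodal Jᶜ x :=
    prod_congr rfl fun j hj => by rw [piecewise_eq_of_notMem _ _ _ (mem_compl.1 hj)]
  refine ⟨J.piecewise r x, ?_⟩
  rw [← nodal_mul_nodal_compl J, ← nodal_mul_nodal_compl J, hy_J, hy_compl, hr, sub_mul]

end Perturbation

section Pencil

open Lagrange Topology Finset

variable {σ : Type*} [Fintype σ]

theorem eval_esymm_eq_coeff_nodal {R : Type*} [CommRing R] (x : σ → R) {i : ℕ}
    (hi : i ≤ Fintype.card σ) :
    eval x (esymm σ R i) = (-1) ^ i * (nodal univ x).coeff (Fintype.card σ - i) := by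
  have h := Multiset.prod_X_sub_C_coeff (univ.val.map x) (k := Fintype.card σ - i) (by simp)
  rw [Multiset.map_map, Multiset.card_map, card_val, card_univ, Nat.sub_sub_self hi,
    ← aeval_esymm_eq_multiset_esymm σ R, aeval_eq_eval] at h
  rw [show (nodal univ x).coeff (Fintype.card σ - i) = (-1) ^ i * eval x (esymm σ R i) from h,
    ← mul_assoc, ← mul_pow, neg_one_mul, neg_neg, one_pow, one_mul]

theorem esymm_eq_zero_of_card_lt {R : Type*} [CommSemiring R] {i : ℕ} (hi : Fintype.card σ < i) :
    esymm σ R i = 0 := by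
  rw [esymm, powersetCard_eq_empty.2 (by simpa using hi), sum_empty]

variable {𝕜 : Type*} [NontriviallyNormedField 𝕜] [CompleteSpace 𝕜]

theorem exists_esymm_mem_midpointFiltration {d : ℕ} {x : σ → 𝕜} {J : Finset σ} (hJ : #J = d + 1)
    (hx : Set.InjOn x J) :
    ∃ y z : σ → 𝕜, (∀ i, esymm σ 𝕜 i ∈ midpointFiltration d x y z i) ∧
      eval y (esymm σ 𝕜 (d + 1)) ≠ eval x (esymm σ 𝕜 (d + 1)) := by
  classical
  have hperturb := eventually_exists_nodal_univ_eq (card_pos.1 (by lia)) hx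
  have hperturb_neg := (continuous_neg.tendsto' (0 : 𝕜) 0 neg_zero).eventually hperturb
  obtain ⟨ε, ⟨⟨y, hy⟩, z, hz⟩, hε⟩ :=
    ((hperturb.and hperturb_neg).filter_mono nhdsWithin_le_nhds |>.and
      (self_mem_nhdsWithin : {0}ᶜ ∈ 𝓝[≠] (0 : 𝕜))).exists
  have hdeg : (nodal Jᶜ x).natDegree + (d + 1) = Fintype.card σ := by
    rw [natDegree_nodal, ← hJ, card_compl_add_card]
  have hcoeff {δ : 𝕜} {u : σ → 𝕜}
      (hu : nodal univ u = nodal univ x - Polynomial.C δ * nodal Jᶜ x) {i : ℕ}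
      (hi : i ≤ Fintype.card σ) : eval u (esymm σ 𝕜 i) =
        eval x (esymm σ 𝕜 i) - (-1) ^ i * (δ * (nodal Jᶜ x).coeff (Fintype.card σ - i)) := by
    rw [eval_esymm_eq_coeff_nodal u hi, hu, Polynomial.coeff_sub, Polynomial.coeff_C_mul, mul_sub,
      ← eval_esymm_eq_coeff_nodal x hi]
  refine ⟨y, z, fun i => ?_, ?_⟩
  · obtain hi | hi := lt_or_ge (Fintype.card σ) i
    · rw [esymm_eq_zero_of_card_lt hi]
      exact Submodule.zero_mem _
    refine ⟨fun hid => ?_, fun _ => ?_⟩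
    · have hzero : (nodal Jᶜ x).coeff (Fintype.card σ - i) = 0 :=
        Polynomial.coeff_eq_zero_of_natDegree_lt (by lia)
      simp [hcoeff hy hi, hcoeff hz hi, hzero]
    · rw [hcoeff hy hi, hcoeff hz hi]
      ring
  · have hlead : (nodal Jᶜ x).coeff (Fintype.card σ - (d + 1)) = 1 := by
      rw [← hdeg, Nat.add_sub_cancel]
      exact nodal_monic.coeff_natDegree
    rw [hcoeff hy (by lia), hlead, mul_one, Ne, sub_eq_self]
    exact mul_ne_zero (pow_ne_zero _ (neg_ne_zero.2 one_ne_zero)) hε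

end Pencil

section HalfDegree

open Finset

theorem exists_isMinOn_forall_eq_of_midpoint {X : Type*} [TopologicalSpace X] {K : Set X}
    (hK : IsCompact K) (hK_ne : K.Nonempty) {f g : X → ℝ} (hf : Continuous f)
    (hg : Continuous g) :
    ∃ m ∈ K, IsMinOn f K m ∧ ∀ y ∈ K, ∀ z ∈ K,
      f y + f z = 2 * f m → g y + g z = 2 * g m → g y = g m := by
  obtain ⟨u, huK, hu⟩ := hK.exists_isMinOn hK_ne hf.continuousOn
  obtain ⟨m, ⟨hmK, hmu⟩, hm⟩ := (hK.inter_right (isClosed_le hf continuous_const)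
    (t := {y | f y ≤ f u})).exists_isMaxOn ⟨u, huK, le_refl (f u)⟩ hg.continuousOn
  have hfm : f m ≤ f u := hmu
  refine ⟨m, hmK, fun y hy => hfm.trans (hu hy), fun y hy z hz hfyz hgyz => ?_⟩
  have hfy : f u ≤ f y := hu hy
  have hfz : f u ≤ f z := hu hz
  have hgy : g y ≤ g m := hm ⟨hy, show f y ≤ f u by linarith⟩
  have hgz : g z ≤ g m := hm ⟨hz, show f z ≤ f u by linarith⟩
  linarith

variable {σ : Type*} [Fintype σ]

theorem psum_two_eq {R : Type*} [CommRing R] :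
    MvPolynomial.psum σ R 2 = esymm σ R 1 ^ 2 - 2 * esymm σ R 2 := by
  have hfilter : {a ∈ antidiagonal 2 | a.1 ∈ Set.Ioo 0 2} = {(1, 1)} := by decide
  rw [psum_eq_mul_esymm_sub_sum σ R 2 two_pos, hfilter, sum_singleton, psum_one, ← esymm_one]
  ring

theorem isCompact_esymm_fiber {d : ℕ} (hd : 2 ≤ d) (x : σ → ℝ) :
    IsCompact {y : σ → ℝ | ∀ i ≤ d, eval y (esymm σ ℝ i) = eval x (esymm σ ℝ i)} := by
  have hsq (u : σ → ℝ) :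
      ∑ j, u j ^ 2 = eval u (esymm σ ℝ 1) ^ 2 - 2 * eval u (esymm σ ℝ 2) := by
    simpa [MvPolynomial.psum] using congrArg (eval u) (psum_two_eq (σ := σ) (R := ℝ))
  refine (isCompact_univ_pi fun _ => isCompact_Icc (a := -√(∑ j, x j ^ 2))
    (b := √(∑ j, x j ^ 2))).of_isClosed_subset ?_ fun y hy j _ => ?_
  · simp only [Set.ofPred_forall]
    exact isClosed_iInter fun i => isClosed_iInter fun _ =>
      isClosed_eq (continuous_eval _) continuous_const
  · have hnorm : ∑ j, y j ^ 2 = ∑ j, x j ^ 2 := by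
      rw [hsq, hsq, hy 1 (by lia), hy 2 hd]
    refine abs_le.1 (Real.abs_le_sqrt ?_)
    rw [← hnorm]
    exact single_le_sum (f := fun j => y j ^ 2) (fun i _ => sq_nonneg _) (mem_univ j)

theorem exists_injOn_card_eq_of_le_card_image {α β : Type*} [DecidableEq β] {f : α → β}
    {s : Finset α} {k : ℕ} (hk : k ≤ #(s.image f)) : ∃ J : Finset α, #J = k ∧ Set.InjOn f J := by
  obtain ⟨t, ht, rfl⟩ := exists_subset_card_eq hk
  obtain ⟨J, -, hJ, rfl⟩ :=
    t.exists_subset_injOn_image_eq_of_surjOn (f := f) s fun b hb => by simpa using ht hb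
  exact ⟨J, (card_image_of_injOn hJ).symm, hJ⟩

theorem exists_card_image_le_eval_le {d : ℕ} (hd : 2 ≤ d) {p : MvPolynomial σ ℝ}
    (hp : ∀ x y z : σ → ℝ, (∀ i, esymm σ ℝ i ∈ midpointFiltration d x y z i) →
      eval y p + eval z p = 2 * eval x p) (x : σ → ℝ) :
    ∃ m : σ → ℝ, #(univ.image m) ≤ d ∧ eval m p ≤ eval x p := by
  obtain ⟨m, hm, hmin, hmax⟩ := exists_isMinOn_forall_eq_of_midpoint (isCompact_esymm_fiber hd x)
    ⟨x, fun _ _ => rfl⟩ (continuous_eval p) (continuous_eval (esymm σ ℝ (d + 1)))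
  refine ⟨m, ?_, hmin fun _ _ => rfl⟩
  by_contra! hcard
  obtain ⟨J, hJ, hm_inj⟩ := exists_injOn_card_eq_of_le_card_image hcard
  obtain ⟨y, z, he, hne⟩ := exists_esymm_mem_midpointFiltration hJ hm_inj
  refine hne (hmax y (fun i hi => ?_) z (fun i hi => ?_) (hp m y z he)
    ((he (d + 1)).2 (by lia)))
  · rw [((he i).1 hi).1, hm i hi]
  · rw [((he i).1 hi).2, hm i hi]

end HalfDegree

section Frequency

open Finset

variable {n d : ℕ}

/-- The weight vector `w ∈ W_n` of a colouring of the `n` coordinates by `d` colours: `w_i` is the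
proportion of coordinates with colour `i`. -/
noncomputable def fiberFrequency (τ : Fin n → Fin d) (i : Fin d) : ℝ :=
  (n : ℝ)⁻¹ * #{j | τ j = i}

theorem inv_mul_sum_comp_eq (τ : Fin n → Fin d) (g : Fin d → ℝ) :
    (n : ℝ)⁻¹ * ∑ j, g (τ j) = ∑ i, fiberFrequency τ i * g i := by
  simp only [← sum_fiberwise univ τ, mul_sum, fiberFrequency]
  refine sum_congr rfl fun i _ => ?_
  rw [sum_congr rfl fun j hj => by rw [(mem_filter.1 hj).2], sum_const,
    nsmul_eq_mul, mul_left_comm, mul_assoc]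

theorem eval_comp_symForm {k : ℕ} (τ : Fin n → Fin d) (t : Fin d → ℝ)
    (c : Nat.Partition k → ℝ) :
    eval (t ∘ τ) (symForm n c) = phiForm d c (fiberFrequency τ) t := by
  have hpsum (i : ℕ) :
      eval (t ∘ τ) (_root_.psum n i) = ∑ j, fiberFrequency τ j * t j ^ i := by
    simpa [_root_.psum] using inv_mul_sum_comp_eq τ (t · ^ i)
  simp only [symForm, pPart, phiForm, phiPart, map_sum, map_mul, eval_C, map_multiset_prod,
    Multiset.map_map, Function.comp_apply, hpsum]

theorem exists_comp_eq_of_card_image_le {α β : Type*} [Fintype α] [DecidableEq β] [Nonempty β]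
    (m : α → β) (h : #(univ.image m) ≤ d) : ∃ (τ : α → Fin d) (t : Fin d → β), t ∘ τ = m := by
  obtain ⟨e⟩ : Nonempty (univ.image m ↪ Fin d) :=
    Function.Embedding.nonempty_of_card_le (by simpa using h)
  refine ⟨fun j => e ⟨m j, by simp⟩,
    Function.extend e Subtype.val fun _ => Classical.arbitrary β, ?_⟩
  funext j
  simp [e.injective.extend_apply]

theorem exists_card_fiber_eq {ι : Type*} [Fintype ι] [DecidableEq ι] (a : ι → ℕ)
    (ha : ∑ i, a i = n) : ∃ τ : Fin n → ι, ∀ i, #{j | τ j = i} = a i := by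
  have e : Fin n ≃ (i : ι) × Fin (a i) := Fintype.equivOfCardEq (by simp [ha])
  refine ⟨fun j => (e j).1, fun i => ?_⟩
  rw [← Fintype.card_subtype]
  calc Fintype.card {j // (e j).1 = i}
      = Fintype.card {p : (i : ι) × Fin (a i) // p.1 = i} :=
        Fintype.card_congr (e.subtypeEquiv fun _ => Iff.rfl)
    _ = Fintype.card (Fin (a i)) := Fintype.card_congr (Equiv.sigmaSubtype i)
    _ = a i := Fintype.card_fin _

theorem exists_fiberFrequency_eq_iff (hn : n ≠ 0) {w : Fin d → ℝ} :
    (∃ τ : Fin n → Fin d, fiberFrequency τ = w) ↔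
      (∀ i, ∃ m : ℕ, (n : ℝ) * w i = m) ∧ ∑ i, w i = 1 := by
  have hn' : (n : ℝ) ≠ 0 := Nat.cast_ne_zero.2 hn
  constructor
  · rintro ⟨τ, rfl⟩
    refine ⟨fun i => ⟨_, mul_inv_cancel_left₀ hn' _⟩, ?_⟩
    simpa [hn'] using (inv_mul_sum_comp_eq τ 1).symm
  · rintro ⟨hw, hw_sum⟩
    choose a ha using hw
    have ha_sum : ∑ i, a i = n := by
      rify
      rw [← sum_congr rfl fun i _ => ha i, ← mul_sum, hw_sum, mul_one]
    obtain ⟨τ, hτ⟩ := exists_card_fiber_eq a ha_sum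
    exact ⟨τ, funext fun i => by rw [fiberFrequency, hτ, ← ha, inv_mul_cancel_left₀ hn']⟩

end Frequency

theorem nonneg_iff_phi_on_Wn_general {d n k : ℕ} (hd : 2 ≤ d) (hn : n ≠ 0) (hk : k ≤ 2 * d)
    (c : Nat.Partition k → ℝ) :
    (∀ x : Fin n → ℝ, 0 ≤ eval x (symForm n c)) ↔
    (∀ w : Fin d → ℝ,
      ((∀ i : Fin d, ∃ m : ℕ, (n : ℝ) * w i = (m : ℝ)) ∧ ∑ i : Fin d, w i = 1) →
        ∀ t : Fin d → ℝ, 0 ≤ phiForm d c w t) := by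
  simp only [← exists_fiberFrequency_eq_iff hn, forall_exists_index, forall_apply_eq_imp_iff,
    ← eval_comp_symForm]
  refine ⟨fun h τ t => h (t ∘ τ), fun h x => ?_⟩
  obtain ⟨m, hm, hmx⟩ := exists_card_image_le_eval_le hd
    (fun _ _ _ he => (midpointFiltration.symForm_mem he c).2 hk) x
  obtain ⟨τ, t, rfl⟩ := exists_comp_eq_of_card_image_le m hm
  exact (h τ t).trans hmx

/-- For `d ≥ 2` and `n ≥ 2d`, the symmetric form `f = Σ_{λ⊢2d} c_λ p_λ^{(n)}`
is nonnegative on `ℝ^n` if and only if for every `w ∈ W_n` (vectors with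
`n·w_i ∈ ℕ ∪ {0}` summing to `1`) the `d`-variate form `t ↦ Φ_f(w,t)` is
nonnegative on `ℝ^d`. -/
theorem nonneg_iff_phi_on_Wn (d n : ℕ) (hd : 2 ≤ d) (hn : 2 * d ≤ n)
    (c : Nat.Partition (2 * d) → ℝ) :
    (∀ x : Fin n → ℝ, 0 ≤ eval x (symForm n c)) ↔
    (∀ w : Fin d → ℝ,
      ((∀ i : Fin d, ∃ m : ℕ, (n : ℝ) * w i = (m : ℝ)) ∧ ∑ i : Fin d, w i = 1) →
        ∀ t : Fin d → ℝ, 0 ≤ phiForm d c w t) :=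
  nonneg_iff_phi_on_Wn_general hd (by lia) le_rfl c
end

section
/- Let n ≥ 4 and let f be a symmetric quartic form in n variables that is a sum of squares of polynomials. Then there exist real numbers α_{11}, α_{12}, α_{22}, β_{11}, β_{12}, β_{22}, γ such that γ ≥ 0, the 2×2 matrices [[α_{11}, α_{12}],[α_{12}, α_{22}]] and [[β_{11}, β_{12}],[β_{12}, β_{22}]] are positive semidefinite, and f = α_{11} p_{(1,1,1,1)} + 2α_{12} p_{(2,1,1)} + α_{22} p_{(2,2)} + β_{11}(p_{(2,1,1)} − p_{(1,1,1,1)}) + 2β_{12}(p_{(3,1)} − p_{(2,1,1)}) + β_{22}(p_{(4)} − p_{(2,2)}) + γ((1/2) p_{(1,1,1,1)} − p_{(2,1,1)} + ((n^2−3n+3)/(2n^2)) p_{(2,2)} + ((2n−2)/n^2) p_{(3,1)} + ((1−n)/(2n^2)) p_{(4)}), where all p_λ = p_λ^{(n)}. -/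
open MvPolynomial

open scoped BigOperators
open Equiv (Perm)
open Function (Injective)

/-!
A symmetric form is its own average over the permutations of the variables, so it suffices to
average each square `q ^ 2`; homogeneity of the form forces every `q` to be a quadratic form.
Write `q = p₁ L + L' + Q`, where `L` is linear in the `x i`, `L'` is linear in the `x i ^ 2`, and
the coefficients of `Q` are orthogonal to all arrays `e i + e j`. The average of
`q (x ∘ σ) ^ 2` over `σ` follows Schur's lemma: since permutations act transitively on injective
tuples of indices, the products `L * Q` and `L' * Q` average to zero, the products of `L` and `L'`
average to a mean part and a covariance part, which give the two positive semidefinite matrices,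
and `Q ^ 2` averages to a nonnegative multiple of the squared norm of the component of the array
`x i * x j` orthogonal to all `e i + e j`, which is a multiple of the last form.
-/

theorem expect_comp_perm {ι M : Type*} [Fintype ι] [AddCommMonoid M] [Module ℚ≥0 M] (σ : Perm ι)
    (a : ι → M) : 𝔼 i, a (σ i) = 𝔼 i, a i :=
  Fintype.expect_equiv σ _ _ fun _ => rfl

theorem exists_expect_perm_comp_eq {ι M : Type*} [Fintype ι] [DecidableEq ι] [AddCommMonoid M]
    [Module ℚ≥0 M] {m : ℕ} (F : (Fin m → ι) → M) :
    ∃ c, ∀ t, Injective t → 𝔼 σ : Perm ι, F (σ ∘ t) = c := by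
  by_cases h : ∃ s : Fin m → ι, Injective s
  · obtain ⟨s, hs⟩ := h
    refine ⟨𝔼 σ : Perm ι, F (σ ∘ s), fun t ht => ?_⟩
    have := Equiv.Perm.isMultiplyPretransitive ι m
    obtain ⟨τ, hτ⟩ := MulAction.exists_smul_eq (Perm ι) (⟨s, hs⟩ : Fin m ↪ ι) ⟨t, ht⟩
    obtain rfl : τ ∘ s = t := funext (DFunLike.congr_fun hτ)
    exact Fintype.expect_equiv (Equiv.mulRight τ) _ _ fun σ => rfl
  · exact ⟨0, fun t ht => absurd ⟨t, ht⟩ h⟩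

section Average

variable {ι K : Type*} [Fintype ι] [Field K] [CharZero K]

/-- The covariance of two families of numbers, the index being uniformly distributed. -/
def cov (a b : ι → K) : K := 𝔼 i, a i * b i - (𝔼 i, a i) * 𝔼 i, b i

theorem cov_eq_zero_of_subsingleton [Subsingleton ι] (a b : ι → K) : cov a b = 0 := by
  rcases isEmpty_or_nonempty ι with _ | ⟨⟨i⟩⟩
  · simp [cov]
  · have : Unique ι := uniqueOfSubsingleton i
    simp [cov]

theorem mean_mul_mean_of_subsingleton [Subsingleton ι] (a b : ι → K) :
    (𝔼 i, a i) * 𝔼 i, b i = 𝔼 i, a i * b i :=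
  (sub_eq_zero.1 (cov_eq_zero_of_subsingleton a b)).symm

theorem cov_linear_combination_self (s t : K) (a b : ι → K) :
    cov (s • a + t • b) (s • a + t • b) =
      cov a a * s ^ 2 + 2 * cov a b * (s * t) + cov b b * t ^ 2 := by
  have hmul (i : ι) : (s • a + t • b) i * (s • a + t • b) i =
      s ^ 2 * (a i * a i) + 2 * (s * t) * (a i * b i) + t ^ 2 * (b i * b i) := by
    simp only [Pi.add_apply, Pi.smul_apply, smul_eq_mul]
    ring
  rw [cov, Finset.expect_congr rfl fun i _ => hmul i]
  simp only [cov, Pi.add_apply, Pi.smul_apply, smul_eq_mul, Finset.expect_add_distrib,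
    ← Finset.mul_expect]
  ring

theorem cov_self_nonneg (a : ι → ℝ) : 0 ≤ cov a a := by
  rcases isEmpty_or_nonempty ι with _ | _
  · exact (cov_eq_zero_of_subsingleton a a).ge
  calc 0 ≤ 𝔼 i, (a i - 𝔼 j, a j) ^ 2 := Finset.expect_nonneg fun i _ => sq_nonneg _
    _ = cov a a := by
      simp only [sub_sq, Finset.expect_add_distrib, Finset.expect_sub_distrib,
        ← Finset.expect_mul, ← Finset.mul_expect, Fintype.expect_const, cov, ← sq]
      ring

theorem posSemidef_fin_two_of_forall {a b c : ℝ}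
    (h : ∀ s t : ℝ, 0 ≤ a * s ^ 2 + 2 * b * (s * t) + c * t ^ 2) :
    Matrix.PosSemidef !![a, b; b, c] := by
  refine Matrix.PosSemidef.of_dotProduct_mulVec_nonneg ?_ fun x => ?_
  · ext i j
    fin_cases i <;> fin_cases j <;> simp
  · refine (h (x 0) (x 1)).trans_eq ?_
    simp only [dotProduct, Pi.star_apply, star_trivial, Matrix.mulVec, Matrix.of_apply,
      Matrix.cons_val', Matrix.cons_val_fin_one, Fin.sum_univ_two, Matrix.cons_val_zero,
      Matrix.cons_val_one]
    ring

theorem posSemidef_cov (a b : ι → ℝ) :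
    Matrix.PosSemidef !![cov a a, cov a b; cov a b, cov b b] :=
  posSemidef_fin_two_of_forall fun s t =>
    (cov_self_nonneg _).trans_eq (cov_linear_combination_self s t a b)

theorem posSemidef_cov_div_card_sub_one (a b : ι → ℝ) :
    Matrix.PosSemidef !![cov a a / (Fintype.card ι - 1), cov a b / (Fintype.card ι - 1);
      cov a b / (Fintype.card ι - 1), cov b b / (Fintype.card ι - 1)] := by
  rcases isEmpty_or_nonempty ι with _ | _
  · exact posSemidef_fin_two_of_forall (by simp [cov_eq_zero_of_subsingleton])
  · have h : (0 : ℝ) ≤ (Fintype.card ι - 1 : ℝ)⁻¹ :=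
      inv_nonneg.2 (sub_nonneg.2 (Nat.one_le_cast.2 Fintype.card_pos))
    simpa [div_eq_inv_mul] using (posSemidef_cov a b).smul h

variable [DecidableEq ι]

theorem expect_ite_eq_div_card (i : ι) (a : ι → K) :
    (𝔼 j, if i = j then a j else 0) = a i / Fintype.card ι := by
  rw [Fintype.expect_eq_sum_div_card, Fintype.sum_ite_eq]

theorem expect_perm_apply (a : ι → K) (i : ι) : 𝔼 σ : Perm ι, a (σ i) = 𝔼 j, a j := by
  have : Nonempty ι := ⟨i⟩
  obtain ⟨c, hc⟩ := exists_expect_perm_comp_eq fun t : Fin 1 → ι => a (t 0)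
  have hc' (j : ι) : 𝔼 σ : Perm ι, a (σ j) = c := hc ![j] (Function.injective_of_subsingleton _)
  calc 𝔼 σ : Perm ι, a (σ i) = 𝔼 j, 𝔼 σ : Perm ι, a (σ j) := by
        simp only [hc', Fintype.expect_const]
    _ = 𝔼 σ : Perm ι, 𝔼 j, a (σ j) := Finset.expect_comm ..
    _ = 𝔼 j, a j := by simp only [expect_comp_perm, Fintype.expect_const]

theorem expect_perm_mul_apply_of_ne (a b : ι → K) {i j : ι} (hij : i ≠ j) :
    𝔼 σ : Perm ι, a (σ i) * b (σ j) =
      (𝔼 k, a k) * (𝔼 k, b k) - cov a b / (Fintype.card ι - 1) := by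
  have : Nontrivial ι := ⟨i, j, hij⟩
  have h0 : (Fintype.card ι : K) ≠ 0 := Nat.cast_ne_zero.2 Fintype.card_ne_zero
  have h1 : (Fintype.card ι : K) - 1 ≠ 0 :=
    sub_ne_zero.2 (Nat.cast_ne_one.2 Fintype.one_lt_card.ne')
  obtain ⟨c, hc⟩ := exists_expect_perm_comp_eq fun t : Fin 2 → ι => a (t 0) * b (t 1)
  have hpair (k : ι) : 𝔼 σ : Perm ι, a (σ i) * b (σ k) =
      c + if i = k then 𝔼 l, a l * b l - c else 0 := by
    split_ifs with h
    · rw [← h, expect_perm_apply fun l => a l * b l, add_sub_cancel]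
    · rw [add_zero]
      exact hc ![i, k] (by simp [Injective, Fin.forall_fin_succ, h, Ne.symm h])
  have hmean : (𝔼 k, a k) * 𝔼 k, b k = c + (𝔼 k, a k * b k - c) / Fintype.card ι := by
    calc (𝔼 k, a k) * 𝔼 k, b k = 𝔼 σ : Perm ι, a (σ i) * 𝔼 k, b (σ k) := by
          simp only [expect_comp_perm, ← Finset.expect_mul, expect_perm_apply]
      _ = 𝔼 k, 𝔼 σ : Perm ι, a (σ i) * b (σ k) := by
          simp only [Finset.mul_expect]
          exact Finset.expect_comm ..
      _ = c + (𝔼 k, a k * b k - c) / Fintype.card ι := by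
          have : Nonempty ι := ⟨i⟩
          simp only [hpair, Finset.expect_add_distrib, Fintype.expect_const, expect_ite_eq_div_card]
  rw [hpair, if_neg hij, cov]
  field_simp at hmean ⊢
  linear_combination -hmean

theorem expect_perm_mul_apply (a b : ι → K) (i j : ι) :
    𝔼 σ : Perm ι, a (σ i) * b (σ j) =
      ((𝔼 k, a k) * (𝔼 k, b k) - cov a b / (Fintype.card ι - 1)) +
        if i = j then Fintype.card ι * cov a b / (Fintype.card ι - 1) else 0 := by
  split_ifs with h
  · rw [h, expect_perm_apply fun k => a k * b k]
    rcases subsingleton_or_nontrivial ι with _ | _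
    · simp only [cov_eq_zero_of_subsingleton, mean_mul_mean_of_subsingleton, zero_div, mul_zero,
        sub_zero, add_zero]
    have h1 : (Fintype.card ι : K) - 1 ≠ 0 :=
      sub_ne_zero.2 (Nat.cast_ne_one.2 Fintype.one_lt_card.ne')
    rw [cov]
    field_simp
    ring
  · rw [add_zero, expect_perm_mul_apply_of_ne a b h]

theorem expect_perm_linear_mul_linear (w z a b : ι → K) :
    𝔼 σ : Perm ι, (𝔼 i, w i * a (σ i)) * (𝔼 i, z i * b (σ i)) =
      (𝔼 i, w i) * (𝔼 i, z i) * ((𝔼 i, a i) * 𝔼 i, b i)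
        + cov w z * cov a b / (Fintype.card ι - 1) := by
  rcases isEmpty_or_nonempty ι with _ | _
  · simp [cov_eq_zero_of_subsingleton]
  have h0 : (Fintype.card ι : K) ≠ 0 := Nat.cast_ne_zero.2 Fintype.card_ne_zero
  have hdiag (c : K) : 𝔼 i, 𝔼 j, (w i * z j * if i = j then c else 0) =
      c * (𝔼 i, w i * z i) / Fintype.card ι := by
    simp only [mul_ite, mul_zero, expect_ite_eq_div_card, ← Finset.expect_mul, ← Finset.expect_div]
    ring
  calc 𝔼 σ : Perm ι, (𝔼 i, w i * a (σ i)) * (𝔼 i, z i * b (σ i))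
      = 𝔼 i, 𝔼 j, w i * z j * 𝔼 σ : Perm ι, a (σ i) * b (σ j) := by
        simp only [Fintype.expect_mul_expect, mul_mul_mul_comm]
        rw [Finset.expect_comm]
        refine Finset.expect_congr rfl fun i _ => ?_
        rw [Finset.expect_comm]
        simp only [Finset.mul_expect]
    _ = (𝔼 i, w i) * (𝔼 i, z i) * ((𝔼 i, a i) * (𝔼 i, b i) - cov a b / (Fintype.card ι - 1))
          + cov a b / (Fintype.card ι - 1) * 𝔼 i, w i * z i := by
        simp only [expect_perm_mul_apply, mul_add, Finset.expect_add_distrib, hdiag,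
          ← Finset.expect_mul, ← Finset.mul_expect]
        field_simp
    _ = _ := by
        rw [cov, cov]
        ring

end Average

/-- A symmetric array with zero diagonal and zero row sums. As coefficient arrays of quadratic forms
these make up the isotypic component of the Specht module `S^(n-2,2)` under permutations. -/
structure IsBalanced {ι K : Type*} [Fintype ι] [AddCommMonoid K] (R : ι → ι → K) : Prop where
  symm : ∀ i j, R i j = R j i
  diag : ∀ i, R i i = 0
  row_sum : ∀ i, ∑ j, R i j = 0

namespace IsBalanced

theorem sum_mul_eq_zero {ι K : Type*} [Fintype ι] [NonUnitalNonAssocSemiring K]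
    {R : ι → ι → K} (hR : IsBalanced R) {T : ι → ι → K} {e f : ι → K}
    (hT : ∀ i j, i ≠ j → T i j = e i + f j) : ∑ i, ∑ j, R i j * T i j = 0 := by
  have hcol (j : ι) : ∑ i, R i j = 0 := by simp only [hR.symm _ j, hR.row_sum]
  calc ∑ i, ∑ j, R i j * T i j = ∑ i, ∑ j, (R i j * e i + R i j * f j) := by
        refine Fintype.sum_congr _ _ fun i => Fintype.sum_congr _ _ fun j => ?_
        rcases eq_or_ne i j with rfl | hij
        · simp only [hR.diag, zero_mul, add_zero]
        · rw [hT i j hij, mul_add]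
    _ = (∑ i, (∑ j, R i j) * e i) + ∑ j, (∑ i, R i j) * f j := by
        simp only [Finset.sum_add_distrib, Finset.sum_mul]
        rw [Finset.sum_comm (f := fun i j => R i j * f j)]
    _ = 0 := by simp only [hR.row_sum, hcol, zero_mul, Finset.sum_const_zero, add_zero]

theorem eq_zero_of_card_le_two {ι K : Type*} [Fintype ι] [AddCommMonoid K] {R : ι → ι → K}
    (hR : IsBalanced R) (hι : Fintype.card ι ≤ 2) : R = 0 := by
  classical
  ext i j
  rcases eq_or_ne i j with rfl | hij
  · exact hR.diag i
  have huniv : ({i, j} : Finset ι) = Finset.univ :=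
    Finset.eq_univ_of_card _ (by rw [Finset.card_pair hij]; exact hι.antisymm' (by
      rw [← Finset.card_pair hij]; exact Finset.card_le_univ _))
  have := hR.row_sum i
  rwa [← huniv, Finset.sum_pair hij, hR.diag, zero_add] at this

section Field

variable {ι K : Type*} [Fintype ι] [DecidableEq ι] [Field K] [CharZero K] {R : ι → ι → K}

theorem expect_perm_apply_mul_eq_zero (hR : IsBalanced R) (a : ι → K) (M : ι → ι → K) (i : ι) :
    𝔼 σ : Perm ι, a (σ i) * ∑ j, ∑ k, R j k * M (σ j) (σ k) = 0 := by
  obtain ⟨c, hc⟩ := exists_expect_perm_comp_eq fun t : Fin 3 → ι => a (t 0) * M (t 1) (t 2)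
  obtain ⟨d, hd⟩ := exists_expect_perm_comp_eq fun t : Fin 2 → ι => a (t 0) * M (t 0) (t 1)
  obtain ⟨d', hd'⟩ := exists_expect_perm_comp_eq fun t : Fin 2 → ι => a (t 0) * M (t 1) (t 0)
  have hT (j k : ι) (hjk : j ≠ k) : 𝔼 σ : Perm ι, a (σ i) * M (σ j) (σ k) =
      (c + if i = j then d - c else 0) + if i = k then d' - c else 0 := by
    by_cases hj : i = j
    · subst hj
      rw [if_pos rfl, if_neg hjk, add_sub_cancel, add_zero]
      exact hd ![i, k] (by simp [Injective, Fin.forall_fin_succ, hjk, hjk.symm])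
    by_cases hk : i = k
    · subst hk
      rw [if_neg hj, if_pos rfl, add_zero, add_sub_cancel]
      exact hd' ![i, j] (by simp [Injective, Fin.forall_fin_succ, hjk, hjk.symm])
    · rw [if_neg hj, if_neg hk, add_zero, add_zero]
      exact hc ![i, j, k] (by simp [Injective, Fin.forall_fin_succ, *, Ne.symm])
  calc 𝔼 σ : Perm ι, a (σ i) * ∑ j, ∑ k, R j k * M (σ j) (σ k)
      = ∑ j, ∑ k, R j k * 𝔼 σ : Perm ι, a (σ i) * M (σ j) (σ k) := by
        simp only [Finset.mul_sum, Finset.expect_sum_comm, Finset.mul_expect, mul_left_comm]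
    _ = 0 := hR.sum_mul_eq_zero hT

theorem expect_perm_linear_mul_eq_zero (hR : IsBalanced R) (w a : ι → K) (M : ι → ι → K) :
    𝔼 σ : Perm ι, (𝔼 i, w i * a (σ i)) * ∑ j, ∑ k, R j k * M (σ j) (σ k) = 0 := by
  simp only [Finset.expect_mul, mul_assoc]
  rw [Finset.expect_comm]
  simp only [← Finset.mul_expect, hR.expect_perm_apply_mul_eq_zero, mul_zero,
    Finset.expect_const_zero]

theorem expect_perm_sq_eq (hR : IsBalanced R) (p : K) (w z a b : ι → K) (M : ι → ι → K) :
    𝔼 σ : Perm ι, (p * (𝔼 i, w i * a (σ i)) + (𝔼 i, z i * b (σ i))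
      + ∑ i, ∑ j, R i j * M (σ i) (σ j)) ^ 2 =
    p ^ 2 * ((𝔼 i, w i) * (𝔼 i, w i) * ((𝔼 i, a i) * 𝔼 i, a i)
        + cov w w * cov a a / (Fintype.card ι - 1))
      + 2 * p * ((𝔼 i, w i) * (𝔼 i, z i) * ((𝔼 i, a i) * 𝔼 i, b i)
        + cov w z * cov a b / (Fintype.card ι - 1))
      + ((𝔼 i, z i) * (𝔼 i, z i) * ((𝔼 i, b i) * 𝔼 i, b i)
        + cov z z * cov b b / (Fintype.card ι - 1))
      + 𝔼 σ : Perm ι, (∑ i, ∑ j, R i j * M (σ i) (σ j)) ^ 2 := by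
  have hexpand (L L' Q : K) : (p * L + L' + Q) ^ 2 =
      p ^ 2 * (L * L) + 2 * p * (L * L') + L' * L' + 2 * p * (L * Q) + 2 * (L' * Q) + Q ^ 2 := by
    ring
  simp only [hexpand, Finset.expect_add_distrib, ← Finset.mul_expect,
    expect_perm_linear_mul_linear, hR.expect_perm_linear_mul_eq_zero, mul_zero, add_zero]

theorem exists_expect_perm_mul_perm_eq (hR : IsBalanced R) : ∃ g : K, ∀ i j, i ≠ j →
    ∃ e : ι → K, ∀ k l, k ≠ l → 𝔼 σ : Perm ι, R (σ i) (σ j) * R (σ k) (σ l) =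
      (e k + e l) + ((if i = k ∧ j = l then g else 0) + if i = l ∧ j = k then g else 0) := by
  obtain ⟨a, ha⟩ := exists_expect_perm_comp_eq fun t : Fin 2 → ι => R (t 0) (t 1) * R (t 0) (t 1)
  obtain ⟨b, hb⟩ := exists_expect_perm_comp_eq fun t : Fin 3 → ι => R (t 0) (t 1) * R (t 0) (t 2)
  obtain ⟨c, hc⟩ := exists_expect_perm_comp_eq fun t : Fin 4 → ι => R (t 0) (t 1) * R (t 2) (t 3)
  -- `e` accounts for disjoint and for adjacent pairs; `g` is what remains when the pairs agree.
  refine ⟨a - 2 * b + c, fun i j hij => ⟨fun k => c / 2 + if k = i ∨ k = j then b - c else 0,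
    fun k l hkl => ?_⟩⟩
  set S : ι → ι → ι → ι → K := fun i j k l => 𝔼 σ : Perm ι, R (σ i) (σ j) * R (σ k) (σ l) with hS
  have hleft (i j k l : ι) : S j i k l = S i j k l := by
    simp only [hS, hR.symm (_ : ι) _]
  have hright (i j k l : ι) : S i j l k = S i j k l := by
    simp only [hS, hR.symm (_ : ι) _]
  have hpair (i j : ι) (hij : i ≠ j) : S i j i j = a :=
    ha ![i, j] (by simp [Injective, Fin.forall_fin_succ, *, Ne.symm])
  have hpath (i j l : ι) (hij : i ≠ j) (hil : i ≠ l) (hjl : j ≠ l) : S i j i l = b :=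
    hb ![i, j, l] (by simp [Injective, Fin.forall_fin_succ, *, Ne.symm])
  have hdisj (i j k l : ι) (hij : i ≠ j) (hik : i ≠ k) (hil : i ≠ l) (hjk : j ≠ k) (hjl : j ≠ l)
      (hkl : k ≠ l) : S i j k l = c :=
    hc ![i, j, k, l] (by simp [Injective, Fin.forall_fin_succ, *, Ne.symm])
  change S i j k l = _
  -- `grind` splits on which of `i, j` coincide with which of `k, l`.
  clear_value S
  grind

theorem exists_expect_perm_sq_eq (hR : IsBalanced R) : ∃ c : K, ∀ M, IsBalanced M →
    𝔼 σ : Perm ι, (∑ i, ∑ j, R i j * M (σ i) (σ j)) ^ 2 = c * ∑ i, ∑ j, M i j ^ 2 := by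
  obtain ⟨g, hg⟩ := hR.exists_expect_perm_mul_perm_eq
  refine ⟨2 * g, fun M hM => ?_⟩
  have hreindex (σ : Perm ι) : ∑ i, ∑ j, R i j * M (σ⁻¹ i) (σ⁻¹ j) =
      ∑ i, ∑ j, M i j * R (σ i) (σ j) := by
    refine Fintype.sum_equiv σ⁻¹ _ _ fun i => Fintype.sum_equiv σ⁻¹ _ _ fun j => ?_
    simp [mul_comm]
  have hrow (i j : ι) : M i j * ∑ k, ∑ l, M k l * 𝔼 σ : Perm ι, R (σ i) (σ j) * R (σ k) (σ l) =
      2 * g * M i j ^ 2 := by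
    rcases eq_or_ne i j with rfl | hij
    · rw [hM.diag, zero_mul, zero_pow two_ne_zero, mul_zero]
    obtain ⟨e, he⟩ := hg i j hij
    have := hM.sum_mul_eq_zero (T := fun k l => 𝔼 σ : Perm ι, R (σ i) (σ j) * R (σ k) (σ l) -
      ((if i = k ∧ j = l then g else 0) + if i = l ∧ j = k then g else 0))
      fun k l hkl => sub_eq_iff_eq_add.2 (he k l hkl)
    simp only [mul_sub, mul_add, Finset.sum_sub_distrib, Finset.sum_add_distrib, ite_and, mul_ite,
      mul_zero, Finset.sum_ite_irrel, Finset.sum_ite_eq, Finset.mem_univ, if_true,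
      Finset.sum_const_zero, hM.symm j i] at this
    linear_combination M i j * this
  calc 𝔼 σ : Perm ι, (∑ i, ∑ j, R i j * M (σ i) (σ j)) ^ 2
      = 𝔼 σ : Perm ι, (∑ i, ∑ j, M i j * R (σ i) (σ j)) ^ 2 :=
        Fintype.expect_equiv (Equiv.inv _) _ _ fun σ => by
          rw [Equiv.inv_apply, ← hreindex, inv_inv]
    _ = ∑ i, ∑ j, M i j * ∑ k, ∑ l, M k l * 𝔼 σ : Perm ι, R (σ i) (σ j) * R (σ k) (σ l) := by
        simp only [sq, Finset.sum_mul, Finset.expect_sum_comm, mul_assoc, ← Finset.mul_expect]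
        refine Fintype.sum_congr _ _ fun i => Fintype.sum_congr _ _ fun j => ?_
        simp only [Finset.mul_sum, Finset.expect_sum_comm, Finset.mul_expect, mul_left_comm]
    _ = 2 * g * ∑ i, ∑ j, M i j ^ 2 := by simp only [hrow, Finset.mul_sum]

end Field

theorem exists_nonneg_expect_perm_sq_eq {ι : Type*} [Fintype ι] [DecidableEq ι] {R : ι → ι → ℝ}
    (hR : IsBalanced R) : ∃ c : ℝ, 0 ≤ c ∧ ∀ M, IsBalanced M →
    𝔼 σ : Perm ι, (∑ i, ∑ j, R i j * M (σ i) (σ j)) ^ 2 = c * ∑ i, ∑ j, M i j ^ 2 := by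
  obtain ⟨c, hc⟩ := hR.exists_expect_perm_sq_eq
  rcases eq_or_ne R 0 with rfl | hR0
  · exact ⟨0, le_rfl, by simp⟩
  refine ⟨c, ?_, hc⟩
  obtain ⟨i, j, hij⟩ : ∃ i j, R i j ≠ 0 := by
    by_contra! h
    exact hR0 (funext₂ h)
  have hpos : 0 < ∑ i, ∑ j, R i j ^ 2 := by
    refine Finset.sum_pos' (fun i _ => by positivity) ⟨i, Finset.mem_univ i, ?_⟩
    exact Finset.sum_pos' (fun j _ => by positivity) ⟨j, Finset.mem_univ j, by positivity⟩
  refine nonneg_of_mul_nonneg_left ?_ hpos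
  rw [← hc R hR]
  exact Finset.expect_nonneg fun σ _ => sq_nonneg _

end IsBalanced

/-- The off-diagonal array with entries `e i + e j`, as a linear map into a Euclidean space: the
balanced arrays are the symmetric off-diagonal arrays orthogonal to its range. -/
def offDiagSum (ι : Type*) [DecidableEq ι] : (ι → ℝ) →ₗ[ℝ] EuclideanSpace ℝ (ι × ι) where
  toFun e := WithLp.toLp 2 fun p => if p.1 = p.2 then 0 else e p.1 + e p.2
  map_add' e f := by
    ext p
    by_cases h : p.1 = p.2 <;> simp [h, add_add_add_comm]
  map_smul' c e := by
    ext p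
    by_cases h : p.1 = p.2 <;> simp [h, mul_add]

theorem inner_offDiagSum {ι : Type*} [Fintype ι] [DecidableEq ι] {r : EuclideanSpace ℝ (ι × ι)}
    (hsymm : ∀ i j, r (i, j) = r (j, i)) (hdiag : ∀ i, r (i, i) = 0) (e : ι → ℝ) :
    inner ℝ (offDiagSum ι e) r = 2 * ∑ i, e i * ∑ j, r (i, j) := by
  have hterm (i j : ι) : inner ℝ (offDiagSum ι e (i, j)) (r (i, j)) =
      e i * r (i, j) + e j * r (i, j) := by
    rcases eq_or_ne i j with rfl | hij
    · simp [hdiag]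
    · simp only [offDiagSum, LinearMap.coe_mk, AddHom.coe_mk, if_neg hij, RCLike.inner_apply,
        Real.ringHom_apply]
      ring
  rw [PiLp.inner_apply, Fintype.sum_prod_type]
  simp only [hterm, Finset.sum_add_distrib, two_mul, Finset.mul_sum]
  rw [Finset.sum_comm (f := fun i j => e j * r (i, j))]
  simp only [hsymm]

theorem exists_isBalanced_of_symm {ι : Type*} [Fintype ι] {A : ι → ι → ℝ}
    (hA : ∀ i j, A i j = A j i) :
    ∃ (e : ι → ℝ) (R : ι → ι → ℝ), IsBalanced R ∧ ∀ i j, i ≠ j → A i j = e i + e j + R i j := by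
  classical
  let offDiag : EuclideanSpace ℝ (ι × ι) :=
    WithLp.toLp 2 fun p => if p.1 = p.2 then 0 else A p.1 p.2
  obtain ⟨_, ⟨e, rfl⟩, r, hr, hdec⟩ :=
    (offDiagSum ι).range.exists_add_mem_mem_orthogonal offDiag
  have hval (i j : ι) : r (i, j) = if i = j then 0 else A i j - (e i + e j) := by
    have : r = offDiag - offDiagSum ι e := eq_sub_of_add_eq' hdec.symm
    by_cases h : i = j <;> simp [this, offDiag, offDiagSum, h]
  have hdiag (i : ι) : r (i, i) = 0 := by rw [hval, if_pos rfl]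
  have hsymm (i j : ι) : r (i, j) = r (j, i) := by
    simp only [hval, hA i j, add_comm (e i), eq_comm (a := i)]
  refine ⟨e, fun i j => r (i, j), ⟨hsymm, hdiag, fun k => ?_⟩, fun i j hij => ?_⟩
  · have horth := hr _ ⟨Pi.single k 1, rfl⟩
    simpa [inner_offDiagSum hsymm hdiag, Pi.single_apply] using horth
  · simp only [hval, if_neg hij, add_sub_cancel]

theorem IsBalanced.sum_sq_eq {ι K : Type*} [Fintype ι] [CommRing K] {M A : ι → ι → K} {e : ι → K}
    (hM : IsBalanced M) (hA : ∀ i j, i ≠ j → A i j = e i + e j + M i j) :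
    (Fintype.card ι - 1) * (Fintype.card ι - 2) * ∑ i, ∑ j, M i j ^ 2 =
      (Fintype.card ι - 1) * (Fintype.card ι - 2) * (∑ i, ∑ j, A i j ^ 2 - ∑ i, A i i ^ 2)
        - 2 * (Fintype.card ι - 1) * ∑ i, (∑ j, A i j - A i i) ^ 2
        + (∑ i, (∑ j, A i j - A i i)) ^ 2 := by
  classical
  have hrow (i : ι) : ∑ j, A i j - A i i = (Fintype.card ι - 2) * e i + ∑ j, e j := by
    have hAi (j : ι) : A i j = e i + e j + M i j + if i = j then A i i - 2 * e i else 0 := by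
      rcases eq_or_ne i j with rfl | hij
      · simp only [hM.diag, if_true]
        ring
      · simp only [hA i j hij, if_neg hij, add_zero]
    rw [Fintype.sum_congr _ _ hAi]
    simp only [Finset.sum_add_distrib, Finset.sum_const, Finset.card_univ, nsmul_eq_mul,
      hM.row_sum, add_zero, Fintype.sum_ite_eq]
    ring
  have hsq : ∑ i, ∑ j, A i j ^ 2 - ∑ i, A i i ^ 2 = ∑ i, ∑ j, M i j ^ 2
      + 2 * ((Fintype.card ι - 2) * ∑ i, e i ^ 2 + (∑ i, e i) ^ 2) := by
    have hAsq (i j : ι) : A i j ^ 2 = M i j ^ 2 + 2 * (M i j * (e i + e j)) + e i ^ 2 + e j ^ 2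
        + 2 * (e i * e j) + if i = j then A i i ^ 2 - 4 * e i ^ 2 else 0 := by
      rcases eq_or_ne i j with rfl | hij
      · simp only [hM.diag, if_true]
        ring
      · simp only [hA i j hij, if_neg hij, add_zero]
        ring
    have horth := hM.sum_mul_eq_zero (T := fun i j => e i + e j) fun _ _ _ => rfl
    rw [Fintype.sum_congr _ _ fun i => Fintype.sum_congr _ _ (hAsq i)]
    simp only [Finset.sum_add_distrib, ← Finset.mul_sum, horth, Fintype.sum_ite_eq,
      ← Finset.sum_mul, Finset.sum_const, Finset.card_univ, Finset.sum_sub_distrib, nsmul_eq_mul]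
    ring
  simp only [hsq, hrow, add_sq, mul_pow, Finset.sum_add_distrib, ← Finset.mul_sum, ← Finset.sum_mul,
    Finset.sum_const, Finset.card_univ, nsmul_eq_mul, mul_assoc]
  ring

theorem IsBalanced.sum_sq_eq_of_mul {ι K : Type*} [Fintype ι] [CommRing K] {M : ι → ι → K}
    {x e : ι → K} (hM : IsBalanced M) (hx : ∀ i j, i ≠ j → x i * x j = e i + e j + M i j) :
    (Fintype.card ι - 1) * (Fintype.card ι - 2) * ∑ i, ∑ j, M i j ^ 2 =
      (Fintype.card ι - 1) * (Fintype.card ι - 2) * ((∑ i, x i ^ 2) ^ 2 - ∑ i, x i ^ 4)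
        - 2 * (Fintype.card ι - 1) *
          ((∑ i, x i) ^ 2 * ∑ i, x i ^ 2 - 2 * (∑ i, x i) * ∑ i, x i ^ 3 + ∑ i, x i ^ 4)
        + ((∑ i, x i) ^ 2 - ∑ i, x i ^ 2) ^ 2 := by
  have hfrob : ∑ i, ∑ j, (x i * x j) ^ 2 = (∑ i, x i ^ 2) ^ 2 := by
    simp only [mul_pow, sq (∑ i, x i ^ 2), Finset.sum_mul_sum]
  have hrow (i : ι) : ∑ j, x i * x j - x i * x i = (∑ j, x j) * x i - x i ^ 2 := by
    rw [← Finset.mul_sum]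
    ring
  have hrowSum : ∑ i, ((∑ j, x j) * x i - x i ^ 2) = (∑ i, x i) ^ 2 - ∑ i, x i ^ 2 := by
    rw [Finset.sum_sub_distrib, ← Finset.mul_sum, sq]
  have hrowSq : ∑ i, ((∑ j, x j) * x i - x i ^ 2) ^ 2 =
      (∑ i, x i) ^ 2 * ∑ i, x i ^ 2 - 2 * (∑ i, x i) * ∑ i, x i ^ 3 + ∑ i, x i ^ 4 := by
    simp only [Finset.mul_sum _ _ (_ * _), Finset.mul_sum _ _ (_ ^ 2), ← Finset.sum_sub_distrib,
      ← Finset.sum_add_distrib]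
    exact Fintype.sum_congr _ _ fun i => by ring
  have hdiag (i : ι) : (x i * x i) ^ 2 = x i ^ 4 := by ring
  rw [hM.sum_sq_eq hx, hfrob]
  simp only [hdiag, hrow, hrowSum, hrowSq]

theorem IsBalanced.exists_expect_perm_quadratic_sq_eq {ι : Type*} [Fintype ι] [DecidableEq ι]
    {R : ι → ι → ℝ} (hR : IsBalanced R) : ∃ γ : ℝ, 0 ≤ γ ∧ ∀ x : ι → ℝ,
    𝔼 σ : Perm ι, (∑ i, ∑ j, R i j * (x (σ i) * x (σ j))) ^ 2 =
      γ * (1 / 2 * (𝔼 i, x i) ^ 4 - (𝔼 i, x i ^ 2) * (𝔼 i, x i) ^ 2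
        + ((Fintype.card ι : ℝ) ^ 2 - 3 * Fintype.card ι + 3) / (2 * (Fintype.card ι : ℝ) ^ 2)
          * (𝔼 i, x i ^ 2) ^ 2
        + (2 * (Fintype.card ι : ℝ) - 2) / (Fintype.card ι : ℝ) ^ 2 * ((𝔼 i, x i ^ 3) * 𝔼 i, x i)
        + (1 - (Fintype.card ι : ℝ)) / (2 * (Fintype.card ι : ℝ) ^ 2) * 𝔼 i, x i ^ 4) := by
  rcases le_or_gt (Fintype.card ι) 2 with hι | hι
  · exact ⟨0, le_rfl, by simp [hR.eq_zero_of_card_le_two hι]⟩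
  obtain ⟨c, hc0, hc⟩ := hR.exists_nonneg_expect_perm_sq_eq
  have hι2 : (2 : ℝ) < Fintype.card ι := mod_cast hι
  have h0 : (Fintype.card ι : ℝ) ≠ 0 := by positivity
  have h1 : (0 : ℝ) < Fintype.card ι - 1 := by linarith
  have h2 : (0 : ℝ) < Fintype.card ι - 2 := by linarith
  refine ⟨c * (2 * (Fintype.card ι : ℝ) ^ 4) / ((Fintype.card ι - 1) * (Fintype.card ι - 2)),
    by positivity, fun x => ?_⟩
  obtain ⟨e, M, hM, hxM⟩ := exists_isBalanced_of_symm fun i j => mul_comm (x i) (x j)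
  have hQ (σ : Perm ι) : ∑ i, ∑ j, R i j * (x (σ i) * x (σ j)) =
      ∑ i, ∑ j, R i j * M (σ i) (σ j) := by
    have := hR.sum_mul_eq_zero (T := fun i j => x (σ i) * x (σ j) - M (σ i) (σ j))
      fun i j hij => sub_eq_iff_eq_add.2 (hxM _ _ (σ.injective.ne hij))
    simpa only [mul_sub, Finset.sum_sub_distrib, sub_eq_zero] using this
  have hnorm := hM.sum_sq_eq_of_mul hxM
  simp only [hQ, hc M hM, Fintype.expect_eq_sum_div_card]
  field_simp
  linear_combination c * hnorm

theorem exists_isBalanced_quadratic {ι : Type*} [Fintype ι] {A : ι → ι → ℝ}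
    (hA : ∀ i j, A i j = A j i) :
    ∃ (w z : ι → ℝ) (R : ι → ι → ℝ), IsBalanced R ∧ ∀ x : ι → ℝ,
      ∑ i, ∑ j, A i j * (x i * x j) = (𝔼 i, x i) * (𝔼 i, w i * x i) + (𝔼 i, z i * x i ^ 2)
        + ∑ i, ∑ j, R i j * (x i * x j) := by
  classical
  rcases isEmpty_or_nonempty ι with _ | _
  · exact ⟨0, 0, 0, ⟨by simp, by simp, by simp⟩, by simp⟩
  have h0 : (Fintype.card ι : ℝ) ≠ 0 := Nat.cast_ne_zero.2 Fintype.card_ne_zero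
  obtain ⟨e, R, hR, hAR⟩ := exists_isBalanced_of_symm hA
  refine ⟨fun i => 2 * (Fintype.card ι : ℝ) ^ 2 * e i,
    fun i => Fintype.card ι * (A i i - 2 * e i), R, hR, fun x => ?_⟩
  have hterm (i j : ι) : A i j * (x i * x j) = e i * x i * x j + x i * (e j * x j)
      + R i j * (x i * x j) + if i = j then (A i i - 2 * e i) * x i ^ 2 else 0 := by
    rcases eq_or_ne i j with rfl | hij
    · rw [hR.diag, if_pos rfl]
      ring
    · rw [hAR i j hij, if_neg hij]
      ring
  rw [Fintype.sum_congr _ _ fun i => Fintype.sum_congr _ _ (hterm i)]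
  simp only [Finset.sum_add_distrib, ← Finset.mul_sum, ← Finset.sum_mul, Fintype.sum_ite_eq,
    Fintype.expect_eq_sum_div_card, mul_assoc (2 * (Fintype.card ι : ℝ) ^ 2),
    mul_assoc (Fintype.card ι : ℝ)]
  field_simp
  ring

open scoped Pointwise in
theorem exists_eval_eq_of_isHomogeneous_two {ι : Type*} [Fintype ι]
    {q : MvPolynomial ι ℝ} (hq : q.IsHomogeneous 2) :
    ∃ A : ι → ι → ℝ, (∀ i j, A i j = A j i) ∧
      ∀ x : ι → ℝ, eval x q = ∑ i, ∑ j, A i j * (x i * x j) := by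
  classical
  have hmem : q ∈ Submodule.span ℝ
      (Set.range (X : ι → MvPolynomial ι ℝ) * Set.range (X : ι → MvPolynomial ι ℝ)) := by
    rw [← Submodule.span_mul_span, ← homogeneousSubmodule_one_eq_span_X (σ := ι) (R := ℝ), ← sq,
      homogeneousSubmodule_one_pow]
    exact hq
  clear hq
  induction hmem using Submodule.span_induction with
  | mem p hp =>
    obtain ⟨_, ⟨k, rfl⟩, _, ⟨l, rfl⟩, rfl⟩ := hp
    refine ⟨fun i j => (if i = k then if j = l then 1 / 2 else 0 else 0)
      + if j = k then if i = l then 1 / 2 else 0 else 0, fun i j => add_comm _ _, fun x => ?_⟩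
    simp only [map_mul, eval_X, add_mul, ite_mul, zero_mul, Finset.sum_add_distrib,
      Finset.sum_ite_irrel, Finset.sum_ite_eq', Finset.mem_univ, if_true, Finset.sum_const_zero]
    ring
  | zero => exact ⟨0, fun _ _ => rfl, by simp⟩
  | add p p' _ _ hp hp' =>
    obtain ⟨A, hA, h⟩ := hp
    obtain ⟨A', hA', h'⟩ := hp'
    exact ⟨A + A', fun i j => by simp [hA i j, hA' i j], fun x => by
      simp [h, h', add_mul, Finset.sum_add_distrib]⟩
  | smul c p _ hp =>
    obtain ⟨A, hA, h⟩ := hp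
    exact ⟨c • A, fun i j => by simp [hA i j], fun x => by
      simp [h, Finset.mul_sum, mul_assoc]⟩

theorem exists_eval_eq_isotypic {ι : Type*} [Fintype ι] {q : MvPolynomial ι ℝ}
    (hq : q.IsHomogeneous 2) :
    ∃ (w z : ι → ℝ) (R : ι → ι → ℝ), IsBalanced R ∧ ∀ x : ι → ℝ,
      eval x q = (𝔼 i, x i) * (𝔼 i, w i * x i) + (𝔼 i, z i * x i ^ 2)
        + ∑ i, ∑ j, R i j * (x i * x j) := by
  obtain ⟨A, hA, hq⟩ := exists_eval_eq_of_isHomogeneous_two hq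
  obtain ⟨w, z, R, hR, h⟩ := exists_isBalanced_quadratic hA
  exact ⟨w, z, R, hR, fun x => (hq x).trans (h x)⟩

theorem eval_expect {ι κ R : Type*} [CommSemiring R] [Module ℚ≥0 R] (s : Finset κ)
    (f : κ → MvPolynomial ι R) (x : ι → R) :
    eval x (𝔼 i ∈ s, f i) = 𝔼 i ∈ s, eval x (f i) := by
  rw [Finset.expect, map_nnrat_smul, map_sum]
  rfl

theorem eval_psum {n : ℕ} (k : ℕ) (x : Fin n → ℝ) : eval x (_root_.psum n k) = 𝔼 i, x i ^ k := by
  simp [_root_.psum, Fintype.expect_eq_sum_div_card, div_eq_inv_mul]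

/-- The quartic forms of the asserted shape. The positive semidefinite blocks of sizes 2, 2, 1
belong to the isotypic components of the trivial representation, of the standard representation
and of `S^(n-2,2)` in the space of quadratic forms. -/
def IsIsotypicSos {n : ℕ} (f : MvPolynomial (Fin n) ℝ) : Prop :=
  ∃ a11 a12 a22 b11 b12 b22 γ : ℝ, 0 ≤ γ ∧
    Matrix.PosSemidef !![a11, a12; a12, a22] ∧
    Matrix.PosSemidef !![b11, b12; b12, b22] ∧
    f = C a11 * psum n 1 ^ 4
      + C (2 * a12) * (psum n 2 * psum n 1 ^ 2)
      + C a22 * psum n 2 ^ 2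
      + C b11 * (psum n 2 * psum n 1 ^ 2 - psum n 1 ^ 4)
      + C (2 * b12) * (psum n 3 * psum n 1 - psum n 2 * psum n 1 ^ 2)
      + C b22 * (psum n 4 - psum n 2 ^ 2)
      + C γ * (C ((1 : ℝ) / 2) * psum n 1 ^ 4
          - psum n 2 * psum n 1 ^ 2
          + C (((n : ℝ) ^ 2 - 3 * (n : ℝ) + 3) / (2 * (n : ℝ) ^ 2)) * psum n 2 ^ 2
          + C ((2 * (n : ℝ) - 2) / (n : ℝ) ^ 2) * (psum n 3 * psum n 1)
          + C ((1 - (n : ℝ)) / (2 * (n : ℝ) ^ 2)) * psum n 4)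

namespace IsIsotypicSos

variable {n : ℕ} {f g : MvPolynomial (Fin n) ℝ}

theorem zero : IsIsotypicSos (0 : MvPolynomial (Fin n) ℝ) :=
  ⟨0, 0, 0, 0, 0, 0, 0, le_rfl, posSemidef_fin_two_of_forall (by simp),
    posSemidef_fin_two_of_forall (by simp), by simp⟩

theorem add (hf : IsIsotypicSos f) (hg : IsIsotypicSos g) : IsIsotypicSos (f + g) := by
  obtain ⟨a₁₁, a₁₂, a₂₂, b₁₁, b₁₂, b₂₂, γ, hγ, ha, hb, rfl⟩ := hf
  obtain ⟨a₁₁', a₁₂', a₂₂', b₁₁', b₁₂', b₂₂', γ', hγ', ha', hb', rfl⟩ := hg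
  refine ⟨a₁₁ + a₁₁', a₁₂ + a₁₂', a₂₂ + a₂₂', b₁₁ + b₁₁', b₁₂ + b₁₂', b₂₂ + b₂₂', γ + γ',
    add_nonneg hγ hγ', by simpa using ha.add ha', by simpa using hb.add hb', ?_⟩
  simp only [C_add, C_mul]
  ring

end IsIsotypicSos

theorem isIsotypicSos_expect_rename_mul_self {n : ℕ} {q : MvPolynomial (Fin n) ℝ}
    (hq : q.IsHomogeneous 2) :
    IsIsotypicSos (𝔼 σ : Perm (Fin n), rename σ (q * q)) := by
  obtain ⟨w, z, R, hR, hqx⟩ := exists_eval_eq_isotypic hq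
  obtain ⟨γ, hγ, hRR⟩ := hR.exists_expect_perm_quadratic_sq_eq
  refine ⟨_, _, _, _, _, _, γ, hγ,
    posSemidef_fin_two_of_forall (a := (𝔼 i, w i) ^ 2) (b := (𝔼 i, w i) * 𝔼 i, z i)
      (c := (𝔼 i, z i) ^ 2) fun s t => (sq_nonneg ((𝔼 i, w i) * s + (𝔼 i, z i) * t)).trans_eq
        (by ring), posSemidef_cov_div_card_sub_one w z, MvPolynomial.funext fun x => ?_⟩
  have hσ (σ : Perm (Fin n)) : eval x (rename σ (q * q)) =
      ((𝔼 i, x i) * (𝔼 i, w i * x (σ i)) + (𝔼 i, z i * x (σ i) ^ 2)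
        + ∑ i, ∑ j, R i j * (x (σ i) * x (σ j))) ^ 2 := by
    rw [eval_rename, map_mul, ← sq, hqx]
    simp only [Function.comp_apply, expect_comp_perm]
  have hxx : cov x x = 𝔼 i, x i ^ 2 - (𝔼 i, x i) ^ 2 := by simp only [cov, sq]
  have hxx₂ : cov x (x · ^ 2) = 𝔼 i, x i ^ 3 - (𝔼 i, x i) * 𝔼 i, x i ^ 2 := by
    simp only [cov, ← pow_succ']
  have hx₂x₂ : cov (x · ^ 2) (x · ^ 2) = 𝔼 i, x i ^ 4 - (𝔼 i, x i ^ 2) ^ 2 := by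
    simp only [cov, ← pow_add, Nat.reduceAdd, sq (𝔼 i, x i ^ 2)]
  rw [eval_expect, Finset.expect_congr rfl fun σ _ => hσ σ,
    hR.expect_perm_sq_eq _ w z x (x · ^ 2) fun i j => x i * x j]
  simp only [hRR, hxx, hxx₂, hx₂x₂, map_add, map_sub, map_mul, map_pow, eval_C, eval_psum, pow_one,
    Fintype.card_fin]
  ring

theorem exists_eq_X_mul_of_sq_eval_le {P : Polynomial ℝ} {B : ℝ} {m : ℕ}
    (h : ∀ t, P.eval t ^ 2 ≤ B * t ^ (2 * (m + 1))) :
    ∃ Q : Polynomial ℝ, P = Polynomial.X * Q ∧ ∀ t, Q.eval t ^ 2 ≤ B * t ^ (2 * m) := by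
  have h0 : P.coeff 0 = 0 := by
    have := h 0
    rw [Polynomial.coeff_zero_eq_eval_zero]
    simpa [sq_nonpos_iff] using this
  obtain ⟨Q, rfl⟩ := Polynomial.X_dvd_iff.2 h0
  have hne (t : ℝ) (ht : t ≠ 0) : Q.eval t ^ 2 ≤ B * t ^ (2 * m) := by
    refine le_of_mul_le_mul_left ?_ (pow_pos (abs_pos.2 ht) 2)
    calc |t| ^ 2 * Q.eval t ^ 2 = (Polynomial.X * Q).eval t ^ 2 := by
          rw [sq_abs, Polynomial.eval_mul, Polynomial.eval_X, mul_pow]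
      _ ≤ B * t ^ (2 * (m + 1)) := h t
      _ = |t| ^ 2 * (B * t ^ (2 * m)) := by
          rw [sq_abs]
          ring
  have hclosed : IsClosed {t : ℝ | Q.eval t ^ 2 ≤ B * t ^ (2 * m)} :=
    isClosed_le (by fun_prop) (by fun_prop)
  exact ⟨Q, rfl, fun t => hclosed.closure_subset_iff.2 hne (dense_compl_singleton 0 t)⟩

theorem exists_eq_C_mul_X_pow_of_sq_eval_le {P : Polynomial ℝ} {B : ℝ} {m : ℕ}
    (h : ∀ t, P.eval t ^ 2 ≤ B * t ^ (2 * m)) :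
    ∃ c, P = Polynomial.C c * Polynomial.X ^ m := by
  induction m generalizing P with
  | zero =>
    have hdeg : P.degree ≤ 0 := (Polynomial.isBoundedUnder_abs_atTop_iff P).1 <|
      Filter.isBoundedUnder_of ⟨√B, fun t => Real.abs_le_sqrt (by simpa using h t)⟩
    exact ⟨P.coeff 0, by rw [pow_zero, mul_one, ← Polynomial.eq_C_of_degree_le_zero hdeg]⟩
  | succ m ih =>
    obtain ⟨Q, rfl, hQ⟩ := exists_eq_X_mul_of_sq_eval_le h
    obtain ⟨c, rfl⟩ := ih hQ
    exact ⟨c, by ring⟩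

theorem eval_smul_of_isHomogeneous {ι R : Type*} [CommSemiring R]
    {p : MvPolynomial ι R} {d : ℕ} (hp : p.IsHomogeneous d) (t : R) (x : ι → R) :
    eval (t • x) p = t ^ d * eval x p := by
  rw [eval_eq, eval_eq, Finset.mul_sum]
  refine Finset.sum_congr rfl fun m hm => ?_
  have hdeg : ∑ i ∈ m.support, m i = d := by
    rw [← hp (mem_support_iff.1 hm), Finsupp.weight_apply]
    simp only [Finsupp.sum, Pi.one_apply, smul_eq_mul, mul_one]
  simp only [Pi.smul_apply, smul_eq_mul, mul_pow, Finset.prod_mul_distrib,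
    Finset.prod_pow_eq_pow_sum, hdeg]
  ring

theorem isHomogeneous_of_sq_eval_smul_le {ι : Type*} {q : MvPolynomial ι ℝ} {m : ℕ}
    (h : ∀ x : ι → ℝ, ∃ B : ℝ, ∀ t : ℝ, eval (t • x) q ^ 2 ≤ B * t ^ (2 * m)) :
    q.IsHomogeneous m := by
  rw [← sum_homogeneousComponent q]
  refine IsHomogeneous.sum _ _ _ fun d hd => ?_
  rcases eq_or_ne d m with rfl | hdm
  · exact homogeneousComponent_isHomogeneous _ _
  suffices homogeneousComponent d q = 0 from this ▸ isHomogeneous_zero _ _ _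
  refine MvPolynomial.funext fun x => ?_
  obtain ⟨B, hB⟩ := h x
  let P : Polynomial ℝ := ∑ k ∈ Finset.range (q.totalDegree + 1),
    Polynomial.C (eval x (homogeneousComponent k q)) * Polynomial.X ^ k
  have hPq (t : ℝ) : P.eval t = eval (t • x) q := by
    conv_rhs => rw [← sum_homogeneousComponent q]
    simp only [P, map_sum, Polynomial.eval_finsetSum, Polynomial.eval_mul, Polynomial.eval_C,
      Polynomial.eval_pow, Polynomial.eval_X,
      eval_smul_of_isHomogeneous (homogeneousComponent_isHomogeneous _ q), mul_comm]
  obtain ⟨c, hPc⟩ := exists_eq_C_mul_X_pow_of_sq_eval_le fun t => (hPq t).symm ▸ hB t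
  have hcoeff := congrArg (Polynomial.coeff · d) hPc
  simpa [P, Polynomial.finsetSum_coeff, Polynomial.coeff_C_mul_X_pow, Finset.mem_range.1 hd, hdm]
    using hcoeff

theorem eval_nonneg_of_isSumSq {ι : Type*} {f : MvPolynomial ι ℝ} (hf : IsSumSq f) (x : ι → ℝ) :
    0 ≤ eval x f := by
  induction hf with
  | zero => exact (map_zero _).ge
  | sq_add p _ ih =>
    rw [map_add, map_mul]
    exact add_nonneg (mul_self_nonneg _) ih

theorem isIsotypicSos_expect_rename {n : ℕ} {f : MvPolynomial (Fin n) ℝ} (hsos : IsSumSq f)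
    (hf : ∀ x : Fin n → ℝ, ∃ B : ℝ, ∀ t : ℝ, eval (t • x) f ≤ B * t ^ 4) :
    IsIsotypicSos (𝔼 σ : Perm (Fin n), rename σ f) := by
  induction hsos with
  | zero => simpa using IsIsotypicSos.zero
  | sq_add q hs ih =>
    simp only [map_add, map_mul] at hf
    simp only [map_add, Finset.expect_add_distrib]
    have hq : q.IsHomogeneous 2 := isHomogeneous_of_sq_eval_smul_le fun x =>
      (hf x).imp fun B hB t => (sq _).trans_le <|
        (le_add_of_nonneg_right (eval_nonneg_of_isSumSq hs (t • x))).trans (hB t)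
    refine (isIsotypicSos_expect_rename_mul_self hq).add (ih fun x => ?_)
    exact (hf x).imp fun B hB t => (le_add_of_nonneg_left (mul_self_nonneg _)).trans (hB t)

theorem sos_quartic_decomposition_general {n : ℕ} {f : MvPolynomial (Fin n) ℝ}
    (hsym : f.IsSymmetric) (hhom : f.IsHomogeneous 4) (hsos : IsSumSq f) : IsIsotypicSos f := by
  have havg : 𝔼 σ : Perm (Fin n), rename σ f = f := by
    simp only [hsym _, Fintype.expect_const]
  rw [← havg]
  exact isIsotypicSos_expect_rename hsos fun x =>
    ⟨eval x f, fun t => by rw [eval_smul_of_isHomogeneous hhom, mul_comm]⟩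

/-- Every symmetric quartic form in `n ≥ 4` variables that is a sum of squares
admits the decomposition of Theorem 6.1, with `γ ≥ 0` and two positive
semidefinite `2×2` coefficient matrices. -/
theorem sos_quartic_decomposition (n : ℕ) (hn : 4 ≤ n)
    (f : MvPolynomial (Fin n) ℝ) (hsym : f.IsSymmetric) (hhom : f.IsHomogeneous 4)
    (hsos : IsSumSq f) :
    ∃ a11 a12 a22 b11 b12 b22 γ : ℝ, 0 ≤ γ ∧
      Matrix.PosSemidef !![a11, a12; a12, a22] ∧
      Matrix.PosSemidef !![b11, b12; b12, b22] ∧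
      f = C a11 * psum n 1 ^ 4
        + C (2 * a12) * (psum n 2 * psum n 1 ^ 2)
        + C a22 * psum n 2 ^ 2
        + C b11 * (psum n 2 * psum n 1 ^ 2 - psum n 1 ^ 4)
        + C (2 * b12) * (psum n 3 * psum n 1 - psum n 2 * psum n 1 ^ 2)
        + C b22 * (psum n 4 - psum n 2 ^ 2)
        + C γ * (C ((1 : ℝ) / 2) * psum n 1 ^ 4
            - psum n 2 * psum n 1 ^ 2
            + C (((n : ℝ) ^ 2 - 3 * (n : ℝ) + 3) / (2 * (n : ℝ) ^ 2)) * psum n 2 ^ 2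
            + C ((2 * (n : ℝ) - 2) / (n : ℝ) ^ 2) * (psum n 3 * psum n 1)
            + C ((1 - (n : ℝ)) / (2 * (n : ℝ) ^ 2)) * psum n 4) :=
  sos_quartic_decomposition_general hsym hhom hsos
end
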